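/- arXiv:2205.12114 — 6 statements merged into one kernel-verified Lean document; each statement's English description precedes it below -/
import Mathlib

section
/- For every n ∈ ℕ and every nondeterministic register automaton (NRA) A with at most n registers, there exists a register set automaton (RsA) B with at most n registers such that L(B) = L(A). -/
/-- A data word over alphabet `Sigma`, with data domain `𝔻 = ℕ`. -/
abbrev DataWord (Sigma : Type) : Type :=
  List (Sigma × ℕ)
/-- An update instruction of a register automaton: copy the content of register `r`,
store the current input value (`in`), or clear the register (`⊥`). -/
inductive NRAUpd : Type where
  | reg (r : ℕ)
  | input
  | clear

/-- A transition `(src, letter, gEq, gNeq, upd, tgt)` of a register automaton. -/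
structure NRATrans (Sigma : Type) where
  src : ℕ
  letter : Sigma
  gEq : Finset ℕ
  gNeq : Finset ℕ
  upd : ℕ → NRAUpd
  tgt : ℕ

/-- The register assignment obtained after taking transition `t` with current input
data value `d`, starting from the assignment `f`. -/
def NRATrans.apply {Sigma : Type} (t : NRATrans Sigma) (f : ℕ → Option ℕ) (d : ℕ) :
    ℕ → Option ℕ := fun r =>
  match t.upd r with
  | NRAUpd.reg r' => f r'
  | NRAUpd.input => some d
  | NRAUpd.clear => none

/-- A (nondeterministic) register automaton; states and registers are drawn from `ℕ`. -/
structure NRA (Sigma : Type) where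
  Q : Finset ℕ
  R : Finset ℕ
  Δ : Set (NRATrans Sigma)
  I : Finset ℕ
  F : Finset ℕ
  finite_trans : Δ.Finite
  I_sub : I ⊆ Q
  F_sub : F ⊆ Q
  wf : ∀ t ∈ Δ, t.src ∈ Q ∧ t.tgt ∈ Q ∧ t.gEq ⊆ R ∧ t.gNeq ⊆ R ∧
    Disjoint t.gEq t.gNeq ∧ ∀ r ∈ R, ∀ r' : ℕ, t.upd r = NRAUpd.reg r' → r' ∈ R

/-- One step of an NRA from configuration `c` to configuration `c'`, reading
the letter `x`. -/
def NRA.Step {Sigma : Type} (A : NRA Sigma) (c : ℕ × (ℕ → Option ℕ)) (x : Sigma × ℕ)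
    (c' : ℕ × (ℕ → Option ℕ)) : Prop :=
  ∃ t ∈ A.Δ, t.src = c.1 ∧ t.letter = x.1 ∧
    (∀ r ∈ t.gEq, c.2 r = some x.2) ∧ (∀ r ∈ t.gNeq, c.2 r ≠ some x.2) ∧
    c' = (t.tgt, t.apply c.2 x.2)

/-- `A.Run c w c'` holds iff `A` can read the data word `w` going from
configuration `c` to configuration `c'`. -/
inductive NRA.Run {Sigma : Type} (A : NRA Sigma) :
    (ℕ × (ℕ → Option ℕ)) → DataWord Sigma → (ℕ × (ℕ → Option ℕ)) → Prop where
  | nil (c : ℕ × (ℕ → Option ℕ)) : NRA.Run A c [] c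
  | cons {c c' c'' : ℕ × (ℕ → Option ℕ)} {x : Sigma × ℕ} {w : DataWord Sigma} :
      A.Step c x c' → NRA.Run A c' w c'' → NRA.Run A c (x :: w) c''

/-- The language of an NRA: words on which there exists an accepting run
starting from some initial state with all registers empty (`⊥`). -/
def NRA.Lang {Sigma : Type} (A : NRA Sigma) : Set (DataWord Sigma) :=
  { w | ∃ q₀ ∈ A.I, ∃ c : ℕ × (ℕ → Option ℕ),
      A.Run (q₀, fun _ => none) w c ∧ c.1 ∈ A.F }

/-- The language of a universal register automaton (same syntax as an NRA):
a data word `w` is accepted iff every run of the automaton on `w` is accepting,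
where a run that gets stuck before reading all of `w` counts as non-accepting.
Equivalently: every partial run on a proper prefix of `w` can be extended, and
every run reading all of `w` ends in a final state. -/
def NRA.URALang {Sigma : Type} (A : NRA Sigma) : Set (DataWord Sigma) :=
  { w | ∀ q₀ ∈ A.I, ∀ u v : DataWord Sigma, w = u ++ v →
      ∀ c : ℕ × (ℕ → Option ℕ), A.Run (q₀, fun _ => none) u c →
        (v = [] → c.1 ∈ A.F) ∧
        ∀ x v', v = x :: v' → ∃ c', A.Step c x c' }
/-- A transition `(src, letter, gIn, gNin, upd, tgt)` of a register set automaton.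
In the update, `none` stands for the current input value `in`, and `some r`
for register `r`. -/
structure RsATrans (Sigma : Type) where
  src : ℕ
  letter : Sigma
  gIn : Finset ℕ
  gNin : Finset ℕ
  upd : ℕ → Finset (Option ℕ)
  tgt : ℕ

/-- The register assignment obtained after taking transition `t` with current input
data value `d`, starting from the assignment `f`: each register gets the union of
the contents of the registers in its update set, together with `{d}` if the update
set contains `in`. -/
def RsATrans.apply {Sigma : Type} (t : RsATrans Sigma) (f : ℕ → Finset ℕ) (d : ℕ) :
    ℕ → Finset ℕ := fun r =>
  (t.upd r).biUnion fun o =>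
    match o with
    | none => {d}
    | some r' => f r'

/-- A register set automaton (RsA); states and registers are drawn from `ℕ`. -/
structure RsA (Sigma : Type) where
  Q : Finset ℕ
  R : Finset ℕ
  Δ : Set (RsATrans Sigma)
  I : Finset ℕ
  F : Finset ℕ
  finite_trans : Δ.Finite
  I_sub : I ⊆ Q
  F_sub : F ⊆ Q
  wf : ∀ t ∈ Δ, t.src ∈ Q ∧ t.tgt ∈ Q ∧ t.gIn ⊆ R ∧ t.gNin ⊆ R ∧
    Disjoint t.gIn t.gNin ∧ ∀ r ∈ R, ∀ r' : ℕ, some r' ∈ t.upd r → r' ∈ R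

/-- One step of an RsA from configuration `c` to configuration `c'`, reading
the letter `x`. -/
def RsA.Step {Sigma : Type} (A : RsA Sigma) (c : ℕ × (ℕ → Finset ℕ)) (x : Sigma × ℕ)
    (c' : ℕ × (ℕ → Finset ℕ)) : Prop :=
  ∃ t ∈ A.Δ, t.src = c.1 ∧ t.letter = x.1 ∧
    (∀ r ∈ t.gIn, x.2 ∈ c.2 r) ∧ (∀ r ∈ t.gNin, x.2 ∉ c.2 r) ∧
    c' = (t.tgt, t.apply c.2 x.2)

/-- `A.Run c w c'` holds iff `A` can read the data word `w` going from
configuration `c` to configuration `c'`. -/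
inductive RsA.Run {Sigma : Type} (A : RsA Sigma) :
    (ℕ × (ℕ → Finset ℕ)) → DataWord Sigma → (ℕ × (ℕ → Finset ℕ)) → Prop where
  | nil (c : ℕ × (ℕ → Finset ℕ)) : RsA.Run A c [] c
  | cons {c c' c'' : ℕ × (ℕ → Finset ℕ)} {x : Sigma × ℕ} {w : DataWord Sigma} :
      A.Step c x c' → RsA.Run A c' w c'' → RsA.Run A c (x :: w) c''

/-- The language of an RsA: words on which there exists an accepting run
starting from some initial state with all registers empty. -/
def RsA.Lang {Sigma : Type} (A : RsA Sigma) : Set (DataWord Sigma) :=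
  { w | ∃ q₀ ∈ A.I, ∃ c : ℕ × (ℕ → Finset ℕ),
      A.Run (q₀, fun _ => ∅) w c ∧ c.1 ∈ A.F }

/-!
A register automaton is a register set automaton all of whose registers hold sets with at most one
element. Reading `⊥` as `∅` and a stored value `d` as `{d}` turns equality guards into membership
guards and copying, storing and clearing into unions of at most one set. On configurations this
reading is a functional bisimulation, hence runs correspond and so do the accepted words.
-/

/-- The register set update simulating a register update: the union over `NRAUpd.toFinset u` of the
contents it names (`none` is the current input) is a singleton or, when the register is cleared, the
empty union. -/
def NRAUpd.toFinset : NRAUpd → Finset (Option ℕ)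
  | .reg r => {some r}
  | .input => {none}
  | .clear => ∅

theorem NRAUpd.some_mem_toFinset {u : NRAUpd} {r : ℕ} : some r ∈ u.toFinset ↔ u = .reg r := by
  cases u <;> simp [NRAUpd.toFinset, eq_comm]

/-- The set-valued register assignment simulating an ordinary one: `⊥` becomes `∅` and a stored
value `d` becomes `{d}`. -/
def toSetAssignment (f : ℕ → Option ℕ) : ℕ → Finset ℕ := fun r => (f r).toFinset

theorem mem_toSetAssignment {f : ℕ → Option ℕ} {r d : ℕ} :
    d ∈ toSetAssignment f r ↔ f r = some d :=
  Option.mem_toFinset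

/-- The configuration of a register set automaton simulating a configuration of a register
automaton: same state, registers read through `toSetAssignment`. -/
def toSetConfig (c : ℕ × (ℕ → Option ℕ)) : ℕ × (ℕ → Finset ℕ) := (c.1, toSetAssignment c.2)

theorem toSetConfig_none (q : ℕ) : toSetConfig (q, fun _ => none) = (q, fun _ => ∅) := rfl

section Simulation

variable {Sigma : Type}

/-- The register set transition simulating a register transition: equality guards are reused as
membership guards. -/
def NRATrans.toRsATrans (t : NRATrans Sigma) : RsATrans Sigma where
  src := t.src
  letter := t.letter
  gIn := t.gEq
  gNin := t.gNeq
  upd r := (t.upd r).toFinset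
  tgt := t.tgt

theorem NRATrans.apply_toRsATrans (t : NRATrans Sigma) (f : ℕ → Option ℕ) (d : ℕ) :
    t.toRsATrans.apply (toSetAssignment f) d = toSetAssignment (t.apply f d) := by
  funext r
  cases h : t.upd r <;>
    simp [RsATrans.apply, NRATrans.apply, NRATrans.toRsATrans, NRAUpd.toFinset, toSetAssignment, h]

theorem NRA.run_nil_iff {A : NRA Sigma} {c c' : ℕ × (ℕ → Option ℕ)} :
    A.Run c [] c' ↔ c = c' :=
  ⟨fun | .nil _ => rfl, fun h => h ▸ .nil c⟩

theorem NRA.run_cons_iff {A : NRA Sigma} {c c'' : ℕ × (ℕ → Option ℕ)} {x : Sigma × ℕ}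
    {w : DataWord Sigma} : A.Run c (x :: w) c'' ↔ ∃ c', A.Step c x c' ∧ A.Run c' w c'' :=
  ⟨fun | .cons hstep hrun => ⟨_, hstep, hrun⟩, fun ⟨_, hstep, hrun⟩ => .cons hstep hrun⟩

theorem RsA.run_nil_iff {B : RsA Sigma} {c c' : ℕ × (ℕ → Finset ℕ)} :
    B.Run c [] c' ↔ c = c' :=
  ⟨fun | .nil _ => rfl, fun h => h ▸ .nil c⟩

theorem RsA.run_cons_iff {B : RsA Sigma} {c c'' : ℕ × (ℕ → Finset ℕ)} {x : Sigma × ℕ}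
    {w : DataWord Sigma} : B.Run c (x :: w) c'' ↔ ∃ c', B.Step c x c' ∧ B.Run c' w c'' :=
  ⟨fun | .cons hstep hrun => ⟨_, hstep, hrun⟩, fun ⟨_, hstep, hrun⟩ => .cons hstep hrun⟩

namespace NRA

/-- The register set automaton simulating a register automaton, with the same states and
registers. -/
def toRsA (A : NRA Sigma) : RsA Sigma where
  Q := A.Q
  R := A.R
  Δ := NRATrans.toRsATrans '' A.Δ
  I := A.I
  F := A.F
  finite_trans := A.finite_trans.image _
  I_sub := A.I_sub
  F_sub := A.F_sub
  wf := by
    rintro _ ⟨t, ht, rfl⟩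
    obtain ⟨hsrc, htgt, hgEq, hgNeq, hdisj, hupd⟩ := A.wf t ht
    exact ⟨hsrc, htgt, hgEq, hgNeq, hdisj,
      fun r hr r' hr' => hupd r hr r' (NRAUpd.some_mem_toFinset.1 hr')⟩

variable {A : NRA Sigma} {c : ℕ × (ℕ → Option ℕ)} {e : ℕ × (ℕ → Finset ℕ)}

theorem toRsA_step_iff {x : Sigma × ℕ} :
    A.toRsA.Step (toSetConfig c) x e ↔ ∃ c', A.Step c x c' ∧ toSetConfig c' = e := by
  constructor
  · rintro ⟨_, ⟨t, ht, rfl⟩, hsrc, hletter, hIn, hNin, rfl⟩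
    exact ⟨_, ⟨t, ht, hsrc, hletter, fun r hr => mem_toSetAssignment.1 (hIn r hr),
      fun r hr => mem_toSetAssignment.not.1 (hNin r hr), rfl⟩,
      Prod.ext rfl (t.apply_toRsATrans c.2 x.2).symm⟩
  · rintro ⟨_, ⟨t, ht, hsrc, hletter, hEq, hNeq, rfl⟩, rfl⟩
    exact ⟨_, ⟨t, ht, rfl⟩, hsrc, hletter, fun r hr => mem_toSetAssignment.2 (hEq r hr),
      fun r hr => mem_toSetAssignment.not.2 (hNeq r hr),
      Prod.ext rfl (t.apply_toRsATrans c.2 x.2).symm⟩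

theorem toRsA_run_iff {w : DataWord Sigma} :
    A.toRsA.Run (toSetConfig c) w e ↔ ∃ c', A.Run c w c' ∧ toSetConfig c' = e := by
  induction w generalizing c with
  | nil => simp only [run_nil_iff, RsA.run_nil_iff, exists_eq_left']
  | cons x w ih =>
    calc A.toRsA.Run (toSetConfig c) (x :: w) e
      _ ↔ ∃ c₁, A.Step c x c₁ ∧ A.toRsA.Run (toSetConfig c₁) w e := by
        simp only [RsA.run_cons_iff, toRsA_step_iff, ↓existsAndEq, and_true]
      _ ↔ ∃ c₁, A.Step c x c₁ ∧ ∃ c', A.Run c₁ w c' ∧ toSetConfig c' = e := by simp only [ih]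
      _ ↔ ∃ c', A.Run c (x :: w) c' ∧ toSetConfig c' = e := by
        simp only [run_cons_iff]
        tauto

theorem lang_toRsA (A : NRA Sigma) : A.toRsA.Lang = A.Lang := by
  ext w
  constructor
  · rintro ⟨q₀, hq₀, e, hrun, hF⟩
    rw [← toSetConfig_none, toRsA_run_iff] at hrun
    obtain ⟨c, hrun, rfl⟩ := hrun
    exact ⟨q₀, hq₀, c, hrun, hF⟩
  · rintro ⟨q₀, hq₀, c, hrun, hF⟩
    refine ⟨q₀, hq₀, toSetConfig c, ?_, hF⟩
    rw [← toSetConfig_none, toRsA_run_iff]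
    exact ⟨c, hrun, rfl⟩

end NRA

end Simulation

theorem nra_to_rsa_general (Sigma : Type) (A : NRA Sigma) :
    ∃ B : RsA Sigma, B.Q = A.Q ∧ B.R = A.R ∧ B.Lang = A.Lang :=
  ⟨A.toRsA, rfl, rfl, A.lang_toRsA⟩

/-- For every `n` and every NRA `A` with at most `n` registers,
there exists an RsA `B` with at most `n` registers accepting the same language. -/
theorem nra_to_rsa (Sigma : Type) [Fintype Sigma] [Nonempty Sigma]
    (n : ℕ) (A : NRA Sigma) (hA : A.R.card ≤ n) :
    ∃ B : RsA Sigma, B.R.card ≤ n ∧ RsA.Lang B = NRA.Lang A := by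
  obtain ⟨B, -, hR, hLang⟩ := nra_to_rsa_general Sigma A
  exact ⟨B, hR ▸ hA, hLang⟩
end

section
/- The class of languages recognized by register set automata is closed under intersection: for any two RsAs A₁ and A₂ over the same alphabet Σ, there exists an RsA A with L(A) = L(A₁) ∩ L(A₂). -/
/-! Guards are conjunctions of literals `d ∈ r` and `d ∉ r`, so the guards of two transitions can be
merged, and when the registers are kept disjoint an update of one factor never reads the other.
Hence the runs of the synchronous product are exactly the pairs of runs on the same word. -/

/-- Encodes two disjoint copies of the register supply `ℕ` into one: `Sum.inl r` and `Sum.inr r`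
stand for register `r` of the first and of the second factor of a product automaton. It is a
separate definition because `simp` would unfold `Equiv.natSumNatEquivNat` to arithmetic. -/
def sumRegister : ℕ ⊕ ℕ ≃ ℕ := Equiv.natSumNatEquivNat

/-- The family on the encoded registers that restricts to `f` on the first copy and to `g` on the
second; used for register assignments and for updates. -/
def sumFamily {α : Type*} (f g : ℕ → α) : ℕ → α := Sum.elim f g ∘ sumRegister.symm

@[simp]
theorem sumFamily_inl {α : Type*} (f g : ℕ → α) (r : ℕ) :
    sumFamily f g (sumRegister (.inl r)) = f r := by
  simp only [sumFamily, Function.comp_apply, Equiv.symm_apply_apply, Sum.elim_inl]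

@[simp]
theorem sumFamily_inr {α : Type*} (f g : ℕ → α) (r : ℕ) :
    sumFamily f g (sumRegister (.inr r)) = g r := by
  simp only [sumFamily, Function.comp_apply, Equiv.symm_apply_apply, Sum.elim_inr]

@[simp]
theorem sumFamily_const {α : Type*} (a : α) : sumFamily (fun _ => a) (fun _ => a) = fun _ => a :=
  (sumRegister.comp_symm_eq _ _).2 (Sum.elim_const_const a)

/-- The encoded disjoint union of two finite sets of registers. -/
def sumRegisters (s t : Finset ℕ) : Finset ℕ := (s.disjSum t).map sumRegister.toEmbedding

@[simp]
theorem inl_mem_sumRegisters {s t : Finset ℕ} {r : ℕ} :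
    sumRegister (.inl r) ∈ sumRegisters s t ↔ r ∈ s :=
  (Finset.mem_map' sumRegister.toEmbedding).trans Finset.inl_mem_disjSum

@[simp]
theorem inr_mem_sumRegisters {s t : Finset ℕ} {r : ℕ} :
    sumRegister (.inr r) ∈ sumRegisters s t ↔ r ∈ t :=
  (Finset.mem_map' sumRegister.toEmbedding).trans Finset.inr_mem_disjSum

theorem forall_mem_sumRegisters {s t : Finset ℕ} {P : ℕ → Prop} :
    (∀ r ∈ sumRegisters s t, P r) ↔
      (∀ r ∈ s, P (sumRegister (.inl r))) ∧ ∀ r ∈ t, P (sumRegister (.inr r)) := by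
  rw [← sumRegister.forall_congr_right, Sum.forall]
  simp only [inl_mem_sumRegisters, inr_mem_sumRegisters]

theorem sumRegisters_mono {s s' t t' : Finset ℕ} (hs : s ⊆ s') (ht : t ⊆ t') :
    sumRegisters s t ⊆ sumRegisters s' t' :=
  Finset.map_subset_map.2 (Finset.disjSum_mono hs ht)

theorem disjoint_sumRegisters {s s' t t' : Finset ℕ} (hs : Disjoint s s') (ht : Disjoint t t') :
    Disjoint (sumRegisters s t) (sumRegisters s' t') := by
  rw [Finset.disjoint_left] at hs ht ⊢
  simpa only [forall_mem_sumRegisters, inl_mem_sumRegisters, inr_mem_sumRegisters] using ⟨hs, ht⟩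

namespace RsATrans

variable {Sigma : Type}

/-- The guards of a transition hold for the register assignment `f` and the input value `d`. -/
def GuardsHold (t : RsATrans Sigma) (f : ℕ → Finset ℕ) (d : ℕ) : Prop :=
  (∀ r ∈ t.gIn, d ∈ f r) ∧ ∀ r ∈ t.gNin, d ∉ f r

/-- The product of two transitions: both are taken at once, on disjoint copies of the registers.
It carries the letter of the first factor and is only meaningful when the letters agree. -/
def prod (t u : RsATrans Sigma) : RsATrans Sigma where
  src := Nat.pair t.src u.src
  letter := t.letter
  gIn := sumRegisters t.gIn u.gIn
  gNin := sumRegisters t.gNin u.gNin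
  upd := sumFamily (fun r => (t.upd r).image (Option.map (sumRegister ∘ Sum.inl)))
    (fun r => (u.upd r).image (Option.map (sumRegister ∘ Sum.inr)))
  tgt := Nat.pair t.tgt u.tgt

theorem guardsHold_prod {t u : RsATrans Sigma} {f g : ℕ → Finset ℕ} {d : ℕ} :
    (t.prod u).GuardsHold (sumFamily f g) d ↔ t.GuardsHold f d ∧ u.GuardsHold g d := by
  simp only [GuardsHold, prod, forall_mem_sumRegisters, sumFamily_inl, sumFamily_inr]
  exact and_and_and_comm

theorem mem_apply {t : RsATrans Sigma} {f : ℕ → Finset ℕ} {d r x : ℕ} :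
    x ∈ t.apply f d r ↔ (none ∈ t.upd r ∧ x = d) ∨ ∃ r', some r' ∈ t.upd r ∧ x ∈ f r' := by
  simp only [apply, Finset.mem_biUnion, Option.exists, Finset.mem_singleton]

theorem apply_prod (t u : RsATrans Sigma) (f g : ℕ → Finset ℕ) (d : ℕ) :
    (t.prod u).apply (sumFamily f g) d = sumFamily (t.apply f d) (u.apply g d) := by
  funext r
  obtain ⟨r | r, rfl⟩ := sumRegister.surjective r <;> ext x <;> simp [mem_apply, prod]

theorem mem_sumRegisters_of_some_mem_upd_prod {t u : RsATrans Sigma} {R S : Finset ℕ}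
    (ht : ∀ r ∈ R, ∀ r', some r' ∈ t.upd r → r' ∈ R)
    (hu : ∀ r ∈ S, ∀ r', some r' ∈ u.upd r → r' ∈ S) :
    ∀ r ∈ sumRegisters R S, ∀ r', some r' ∈ (t.prod u).upd r → r' ∈ sumRegisters R S := by
  simp only [forall_mem_sumRegisters, prod, sumFamily_inl, sumFamily_inr, Finset.mem_image,
    Option.map_eq_some_iff]
  constructor
  · rintro r hr _ ⟨_, hmem, r', rfl, rfl⟩
    exact inl_mem_sumRegisters.2 (ht r hr r' hmem)
  · rintro r hr _ ⟨_, hmem, r', rfl, rfl⟩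
    exact inr_mem_sumRegisters.2 (hu r hr r' hmem)

end RsATrans

namespace RsA

variable {Sigma : Type}

/-- The product automaton, running both factors in lockstep on disjoint copies of their
registers. -/
def prod (A B : RsA Sigma) : RsA Sigma where
  Q := Finset.image₂ Nat.pair A.Q B.Q
  R := sumRegisters A.R B.R
  Δ := {v | ∃ t ∈ A.Δ, ∃ u ∈ B.Δ, t.letter = u.letter ∧ t.prod u = v}
  I := Finset.image₂ Nat.pair A.I B.I
  F := Finset.image₂ Nat.pair A.F B.F
  finite_trans := (A.finite_trans.image2 RsATrans.prod B.finite_trans).subset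
    fun _ ⟨t, ht, u, hu, _, h⟩ => ⟨t, ht, u, hu, h⟩
  I_sub := Finset.image₂_subset A.I_sub B.I_sub
  F_sub := Finset.image₂_subset A.F_sub B.F_sub
  wf := by
    rintro _ ⟨t, ht, u, hu, -, rfl⟩
    obtain ⟨tsrc, ttgt, tIn, tNin, tdisj, tupd⟩ := A.wf t ht
    obtain ⟨usrc, utgt, uIn, uNin, udisj, uupd⟩ := B.wf u hu
    exact ⟨Finset.mem_image₂_of_mem tsrc usrc, Finset.mem_image₂_of_mem ttgt utgt,
      sumRegisters_mono tIn uIn, sumRegisters_mono tNin uNin,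
      disjoint_sumRegisters tdisj udisj,
      RsATrans.mem_sumRegisters_of_some_mem_upd_prod tupd uupd⟩

/-- The configuration of a product automaton formed by configurations of its two factors. -/
def prodConfig (c d : ℕ × (ℕ → Finset ℕ)) : ℕ × (ℕ → Finset ℕ) :=
  (Nat.pair c.1 d.1, sumFamily c.2 d.2)

theorem step_iff {A : RsA Sigma} {c c' : ℕ × (ℕ → Finset ℕ)} {x : Sigma × ℕ} :
    A.Step c x c' ↔ ∃ t ∈ A.Δ, t.src = c.1 ∧ t.letter = x.1 ∧ t.GuardsHold c.2 x.2 ∧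
      c' = (t.tgt, t.apply c.2 x.2) := by
  simp only [Step, RsATrans.GuardsHold, and_assoc]

theorem step_prod {A B : RsA Sigma} {c d e : ℕ × (ℕ → Finset ℕ)} {x : Sigma × ℕ} :
    (A.prod B).Step (prodConfig c d) x e ↔
      ∃ c' d', A.Step c x c' ∧ B.Step d x d' ∧ e = prodConfig c' d' := by
  simp only [step_iff]
  constructor
  · rintro ⟨_, ⟨t, ht, u, hu, hletter, rfl⟩, hsrc, hx, hguards, rfl⟩
    obtain ⟨htsrc, husrc⟩ := Nat.pair_eq_pair.1 hsrc
    obtain ⟨htguards, huguards⟩ := RsATrans.guardsHold_prod.1 hguards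
    exact ⟨_, _, ⟨t, ht, htsrc, hx, htguards, rfl⟩,
      ⟨u, hu, husrc, hletter.symm.trans hx, huguards, rfl⟩,
      Prod.ext rfl (RsATrans.apply_prod t u c.2 d.2 x.2)⟩
  · rintro ⟨_, _, ⟨t, ht, htsrc, htx, htguards, rfl⟩, ⟨u, hu, husrc, hux, huguards, rfl⟩, rfl⟩
    exact ⟨t.prod u, ⟨t, ht, u, hu, htx.trans hux.symm, rfl⟩, Nat.pair_eq_pair.2 ⟨htsrc, husrc⟩,
      htx, RsATrans.guardsHold_prod.2 ⟨htguards, huguards⟩,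
      Prod.ext rfl (RsATrans.apply_prod t u c.2 d.2 x.2).symm⟩

theorem run_nil_iff_s7 {A : RsA Sigma} {c c' : ℕ × (ℕ → Finset ℕ)} : A.Run c [] c' ↔ c' = c :=
  ⟨fun | .nil _ => rfl, by rintro rfl; exact .nil _⟩

theorem run_cons_iff_s7 {A : RsA Sigma} {c c'' : ℕ × (ℕ → Finset ℕ)} {x : Sigma × ℕ}
    {w : DataWord Sigma} : A.Run c (x :: w) c'' ↔ ∃ c', A.Step c x c' ∧ A.Run c' w c'' :=
  ⟨fun | .cons hstep hrun => ⟨_, hstep, hrun⟩, fun ⟨_, hstep, hrun⟩ => .cons hstep hrun⟩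

theorem run_prod {A B : RsA Sigma} {w : DataWord Sigma} {c d e : ℕ × (ℕ → Finset ℕ)} :
    (A.prod B).Run (prodConfig c d) w e ↔
      ∃ c' d', A.Run c w c' ∧ B.Run d w d' ∧ e = prodConfig c' d' := by
  induction w generalizing c d with
  | nil => simp only [run_nil_iff_s7, exists_and_left, exists_eq_left]
  | cons x w ih =>
    simp only [run_cons_iff_s7, step_prod]
    constructor
    · rintro ⟨_, ⟨c', d', hc, hd, rfl⟩, hrun⟩
      obtain ⟨c'', d'', hc', hd', rfl⟩ := ih.1 hrun
      exact ⟨c'', d'', ⟨c', hc, hc'⟩, ⟨d', hd, hd'⟩, rfl⟩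
    · rintro ⟨c'', d'', ⟨c', hc, hc'⟩, ⟨d', hd, hd'⟩, rfl⟩
      exact ⟨_, ⟨c', d', hc, hd, rfl⟩, ih.2 ⟨c'', d'', hc', hd', rfl⟩⟩

theorem prodConfig_empty (p q : ℕ) :
    prodConfig (p, fun _ => ∅) (q, fun _ => ∅) = (Nat.pair p q, fun _ => ∅) :=
  Prod.ext rfl (sumFamily_const ∅)

theorem lang_prod (A B : RsA Sigma) : (A.prod B).Lang = A.Lang ∩ B.Lang := by
  ext w
  have final_iff (c d : ℕ × (ℕ → Finset ℕ)) :
      (prodConfig c d).1 ∈ (A.prod B).F ↔ c.1 ∈ A.F ∧ d.1 ∈ B.F :=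
    Finset.mem_image₂_iff fun _ _ _ _ => Nat.pair_eq_pair.1
  constructor
  · rintro ⟨_, hinit, _, hrun, hfinal⟩
    obtain ⟨p, hp, q, hq, rfl⟩ := Finset.mem_image₂.1 hinit
    rw [← prodConfig_empty] at hrun
    obtain ⟨c, d, hc, hd, rfl⟩ := run_prod.1 hrun
    obtain ⟨hcF, hdF⟩ := (final_iff c d).1 hfinal
    exact ⟨⟨p, hp, c, hc, hcF⟩, ⟨q, hq, d, hd, hdF⟩⟩
  · rintro ⟨⟨p, hp, c, hc, hcF⟩, ⟨q, hq, d, hd, hdF⟩⟩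
    refine ⟨Nat.pair p q, Finset.mem_image₂_of_mem hp hq, prodConfig c d, ?_,
      (final_iff c d).2 ⟨hcF, hdF⟩⟩
    rw [← prodConfig_empty]
    exact run_prod.2 ⟨c, d, hc, hd, rfl⟩

end RsA

theorem rsa_closed_under_intersection_general {Sigma : Type} (A₁ A₂ : RsA Sigma) :
    ∃ A : RsA Sigma, RsA.Lang A = RsA.Lang A₁ ∩ RsA.Lang A₂ :=
  ⟨A₁.prod A₂, A₁.lang_prod A₂⟩

/-- RsA languages are closed under intersection. -/
theorem rsa_closed_under_intersection (Sigma : Type) [Fintype Sigma] [Nonempty Sigma]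
    (A₁ A₂ : RsA Sigma) :
    ∃ A : RsA Sigma, RsA.Lang A = RsA.Lang A₁ ∩ RsA.Lang A₂ :=
  rsa_closed_under_intersection_general A₁ A₂
end

section
/- The class of languages recognized by register set automata is not closed under complement. Concretely, over the unary alphabet Σ = {a}, the language L_¬allrep = { w : some data value occurs at exactly one position of w } is recognized by an RsA (with one register), but its complement L_allrep = { w : every data value occurring in w occurs at at least two positions of w } is not recognized by any RsA. -/
/-- The language of data words (over the unary alphabet) in which some data value
occurs at exactly one position. -/
def LnegAllRep : Set (DataWord Unit) :=
  { w | ∃ i : Fin w.length, ∀ j : Fin w.length, i ≠ j → (w.get i).2 ≠ (w.get j).2 }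

/-- The language of data words (over the unary alphabet) in which every data value
that occurs, occurs at at least two positions. -/
def LallRep : Set (DataWord Unit) :=
  { w | ∀ i : Fin w.length, ∃ j : Fin w.length, i ≠ j ∧ (w.get i).2 = (w.get j).2 }

/-!
A value that does not occur again is only shuffled between registers: a sequence of transitions acts
on the set of registers holding it by a fixed self-map of a finite set. Cut a run whose first half
reads pairwise distinct values at two positions with the same state and the same self-map for the
rest of that half. The transitions in between can be repeated on fresh values without affecting any
guard, and once the rest of the first half has been read, every old value sits in the same registers
as without the repetition, so the second half remains readable. Applied to
`0 1 ⋯ (n-1) 0 1 ⋯ (n-1)`, this yields an accepted word with a value that occurs only once.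
-/

theorem exists_append_append_of_card_le_length {α κ : Type*} {l : List α} {K : Finset κ}
    (key : List α → List α → κ) (hkey : ∀ l₁ l₂, l₁ ++ l₂ = l → key l₁ l₂ ∈ K)
    (hcard : K.card ≤ l.length) :
    ∃ l₁ l₂ l₃, l₁ ++ l₂ ++ l₃ = l ∧ l₂ ≠ [] ∧ key l₁ (l₂ ++ l₃) = key (l₁ ++ l₂) l₃ := by
  obtain ⟨i, j, hij, hj, heq⟩ : ∃ i j, i < j ∧ j ≤ l.length ∧
      key (l.take i) (l.drop i) = key (l.take j) (l.drop j) := by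
    obtain ⟨i, hi, j, hj, hne, heq⟩ := Finset.exists_ne_map_eq_of_card_lt_of_maps_to
      (s := Finset.range (l.length + 1)) (t := K) (by simpa [Nat.lt_succ_iff])
      (f := fun i ↦ key (l.take i) (l.drop i)) fun i _ ↦ hkey _ _ (List.take_append_drop i l)
    obtain hij | hji := hne.lt_or_gt
    · exact ⟨i, j, hij, Finset.mem_range_succ_iff.1 hj, heq⟩
    · exact ⟨j, i, hji, Finset.mem_range_succ_iff.1 hi, heq.symm⟩
  have htake : l.take i ++ (l.drop i).take (j - i) = l.take j := by
    rw [← List.take_add, Nat.add_sub_cancel' hij.le]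
  have hdrop : (l.drop i).take (j - i) ++ l.drop j = l.drop i := by
    rw [← Nat.add_sub_cancel' hij.le, ← List.drop_drop, Nat.add_sub_cancel_left,
      List.take_append_drop]
  refine ⟨l.take i, (l.drop i).take (j - i), l.drop j, ?_, ?_, ?_⟩
  · rw [htake, List.take_append_drop]
  · grind
  · rw [hdrop, htake, heq]

theorem mem_LnegAllRep_iff {w : DataWord Unit} :
    w ∈ LnegAllRep ↔ ∃ d, (w.map Prod.snd).count d = 1 := by
  have count_eq (d : ℕ) : (w.map Prod.snd).count d =
      (Finset.univ.filter fun i : Fin w.length ↦ (w.get i).2 = d).card := by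
    simpa [List.Vector.get] using
      (Fin.card_filter_univ_eq_vector_get_eq_count d
        (⟨w.map Prod.snd, List.length_map _⟩ : List.Vector ℕ w.length)).symm
  simp only [LnegAllRep, Set.mem_ofPred_eq, count_eq, Finset.card_eq_one, Finset.ext_iff,
    Finset.mem_filter, Finset.mem_univ, true_and, Finset.mem_singleton]
  constructor
  · rintro ⟨i, hi⟩
    exact ⟨_, i, fun j ↦
      ⟨fun hj ↦ by_contra fun hne ↦ hi j (Ne.symm hne) hj.symm, fun hj ↦ hj ▸ rfl⟩⟩
  · rintro ⟨d, i, hd⟩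
    exact ⟨i, fun j hij heq ↦ hij ((hd j).1 (heq.symm.trans ((hd i).2 rfl))).symm⟩

theorem LallRep_eq_compl_LnegAllRep : LallRep = LnegAllRepᶜ := by
  ext w
  simp [LallRep, LnegAllRep]

theorem mem_LallRep_iff {w : DataWord Unit} :
    w ∈ LallRep ↔ ∀ d, (w.map Prod.snd).count d ≠ 1 := by
  simp [LallRep_eq_compl_LnegAllRep, mem_LnegAllRep_iff]

namespace RsA

variable {Sigma : Type} (A : RsA Sigma)

section Acceptance

/-- Acceptance of a data word from an arbitrary configuration. -/
def Accepts (c : ℕ × (ℕ → Finset ℕ)) (w : DataWord Sigma) : Prop :=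
  ∃ c', A.Run c w c' ∧ c'.1 ∈ A.F

variable {A}

theorem accepts_nil_iff {c : ℕ × (ℕ → Finset ℕ)} : A.Accepts c [] ↔ c.1 ∈ A.F := by
  constructor
  · rintro ⟨_, ⟨⟩, hF⟩
    exact hF
  · exact fun hF ↦ ⟨c, .nil c, hF⟩

theorem accepts_cons_iff {q : ℕ} {f : ℕ → Finset ℕ} {x : Sigma × ℕ} {w : DataWord Sigma} :
    A.Accepts (q, f) (x :: w) ↔ ∃ t ∈ A.Δ, t.src = q ∧ t.letter = x.1 ∧
      (∀ r ∈ t.gIn, x.2 ∈ f r) ∧ (∀ r ∈ t.gNin, x.2 ∉ f r) ∧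
      A.Accepts (t.tgt, t.apply f x.2) w := by
  constructor
  · rintro ⟨c, _ | ⟨⟨t, ht, hsrc, hletter, hin, hnin, rfl⟩, hrun⟩, hF⟩
    exact ⟨t, ht, hsrc, hletter, hin, hnin, c, hrun, hF⟩
  · rintro ⟨t, ht, hsrc, hletter, hin, hnin, c, hrun, hF⟩
    exact ⟨c, .cons ⟨t, ht, hsrc, hletter, hin, hnin, rfl⟩ hrun, hF⟩

end Acceptance

/-- The transition of `RsA.uniqueValueGuesser` that adds the value read to register `0`. -/
def collect : RsATrans Unit := ⟨0, (), ∅, ∅, fun _ ↦ {some 0, none}, 0⟩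

/-- The transition of `RsA.uniqueValueGuesser` that guesses that the value read, not collected so
far, will not be read again; from now on register `0` holds this value only. -/
def guess : RsATrans Unit := ⟨0, (), ∅, {0}, fun _ ↦ {none}, 1⟩

/-- The transition of `RsA.uniqueValueGuesser` that checks that the guessed value is not read
again. -/
def check : RsATrans Unit := ⟨1, (), ∅, {0}, fun _ ↦ {some 0}, 1⟩

/-- An automaton with one register recognizing `LnegAllRep`. -/
def uniqueValueGuesser : RsA Unit where
  Q := {0, 1}
  R := {0}
  Δ := {collect, guess, check}
  I := {0}
  F := {1}
  finite_trans := by simp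
  I_sub := by simp
  F_sub := by simp
  wf := by simp [collect, guess, check]

theorem uniqueValueGuesser_accepts_one_iff (f : ℕ → Finset ℕ) (w : DataWord Unit) :
    uniqueValueGuesser.Accepts (1, f) w ↔ ∀ d ∈ f 0, d ∉ w.map Prod.snd := by
  induction w generalizing f with
  | nil => simp [accepts_nil_iff, uniqueValueGuesser]
  | cons x w ih =>
    have step : uniqueValueGuesser.Accepts (1, f) (x :: w) ↔
        x.2 ∉ f 0 ∧ uniqueValueGuesser.Accepts (1, check.apply f x.2) w := by
      simp [accepts_cons_iff, uniqueValueGuesser, collect, guess, check]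
    have check_zero : check.apply f x.2 0 = f 0 := by simp [RsATrans.apply, check]
    rw [step, ih, check_zero, List.map_cons]
    grind

theorem uniqueValueGuesser_accepts_zero_iff (f : ℕ → Finset ℕ) (w : DataWord Unit) :
    uniqueValueGuesser.Accepts (0, f) w ↔ ∃ d ∉ f 0, (w.map Prod.snd).count d = 1 := by
  induction w generalizing f with
  | nil => simp [accepts_nil_iff, uniqueValueGuesser]
  | cons x w ih =>
    have step : uniqueValueGuesser.Accepts (0, f) (x :: w) ↔
        uniqueValueGuesser.Accepts (0, collect.apply f x.2) w ∨
          x.2 ∉ f 0 ∧ uniqueValueGuesser.Accepts (1, guess.apply f x.2) w := by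
      simp [accepts_cons_iff, uniqueValueGuesser, collect, guess, check]
    have mem_collect (d : ℕ) : d ∈ collect.apply f x.2 0 ↔ d ∈ f 0 ∨ d = x.2 := by
      simp [RsATrans.apply, collect, or_comm]
    have mem_guess (d : ℕ) : d ∈ guess.apply f x.2 0 ↔ d = x.2 := by
      simp [RsATrans.apply, guess]
    have count_cons (d : ℕ) : ((x :: w).map Prod.snd).count d = 1 ↔
        d ≠ x.2 ∧ (w.map Prod.snd).count d = 1 ∨ d = x.2 ∧ d ∉ w.map Prod.snd := by
      rw [List.map_cons, List.count_cons, ← List.count_eq_zero]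
      grind
    simp only [step, ih, uniqueValueGuesser_accepts_one_iff, mem_collect, mem_guess, count_cons]
    grind

theorem lang_uniqueValueGuesser : uniqueValueGuesser.Lang = LnegAllRep := by
  ext w
  calc w ∈ uniqueValueGuesser.Lang
    _ ↔ uniqueValueGuesser.Accepts (0, fun _ ↦ ∅) w := by
      simp [Lang, Accepts, uniqueValueGuesser]
    _ ↔ w ∈ LnegAllRep := by
      simp [uniqueValueGuesser_accepts_zero_iff, mem_LnegAllRep_iff]

section Traces

/-- The state reached from `q` by a trace, that is, by a list of transitions paired with the data
values they read. -/
def finalState (q : ℕ) (l : List (RsATrans Sigma × ℕ)) : ℕ :=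
  l.foldl (fun _ p ↦ p.1.tgt) q

/-- The register assignment reached from `f` by a trace. -/
def finalRegs (f : ℕ → Finset ℕ) (l : List (RsATrans Sigma × ℕ)) : ℕ → Finset ℕ :=
  l.foldl (fun f p ↦ p.1.apply f p.2) f

/-- The data word read by a trace. -/
def traceWord (l : List (RsATrans Sigma × ℕ)) : DataWord Sigma :=
  l.map (Prod.map RsATrans.letter id)

/-- The trace `l` is a run of `A` starting in the configuration `(q, f)`. -/
def Executes : ℕ → (ℕ → Finset ℕ) → List (RsATrans Sigma × ℕ) → Prop
  | _, _, [] => True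
  | q, f, p :: l => p.1 ∈ A.Δ ∧ p.1.src = q ∧ (∀ r ∈ p.1.gIn, p.2 ∈ f r) ∧
      (∀ r ∈ p.1.gNin, p.2 ∉ f r) ∧ Executes p.1.tgt (p.1.apply f p.2) l

variable {A} {q : ℕ} {f : ℕ → Finset ℕ} {l l₁ l₂ : List (RsATrans Sigma × ℕ)}

theorem traceWord_append : traceWord (l₁ ++ l₂) = traceWord l₁ ++ traceWord l₂ :=
  List.map_append

theorem map_snd_traceWord : (traceWord l).map Prod.snd = l.map Prod.snd := by
  simp [traceWord, Function.comp_def]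

theorem finalState_append :
    finalState q (l₁ ++ l₂) = finalState (finalState q l₁) l₂ :=
  List.foldl_append

theorem finalRegs_append :
    finalRegs f (l₁ ++ l₂) = finalRegs (finalRegs f l₁) l₂ :=
  List.foldl_append

theorem finalState_map_data (π : ℕ → ℕ) :
    finalState q (l.map (Prod.map id π)) = finalState q l := by
  simp [finalState, List.foldl_map]

theorem executes_append_iff :
    A.Executes q f (l₁ ++ l₂) ↔
      A.Executes q f l₁ ∧ A.Executes (finalState q l₁) (finalRegs f l₁) l₂ := by
  induction l₁ generalizing q f with
  | nil => simp [Executes, finalState, finalRegs]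
  | cons p l₁ ih => simp [Executes, finalState, finalRegs, ih, and_assoc]

theorem Executes.mem_transitions (h : A.Executes q f l) : ∀ p ∈ l, p.1 ∈ A.Δ := by
  induction l generalizing q f with
  | nil => simp
  | cons p l ih =>
    obtain ⟨hp, -, -, -, hl⟩ := h
    exact List.forall_mem_cons.2 ⟨hp, ih hl⟩

theorem Executes.finalState_mem (h : A.Executes q f l) (hq : q ∈ A.Q) :
    finalState q l ∈ A.Q := by
  induction l generalizing q f with
  | nil => exact hq
  | cons p l ih =>
    obtain ⟨hp, -, -, -, hl⟩ := h
    exact ih hl (A.wf _ hp).2.1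

theorem accepts_iff_exists_executes {w : DataWord Sigma} :
    A.Accepts (q, f) w ↔
      ∃ l, traceWord l = w ∧ A.Executes q f l ∧ finalState q l ∈ A.F := by
  induction w generalizing q f with
  | nil => simp [accepts_nil_iff, traceWord, Executes, finalState]
  | cons x w ih =>
    rw [accepts_cons_iff]
    constructor
    · rintro ⟨t, ht, hsrc, hletter, hin, hnin, hacc⟩
      obtain ⟨l, rfl, hl, hF⟩ := ih.1 hacc
      exact ⟨(t, x.2) :: l, by simp [traceWord, hletter], ⟨ht, hsrc, hin, hnin, hl⟩, hF⟩
    · rintro ⟨l, hw, hl, hF⟩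
      obtain ⟨p, l, rfl, rfl, rfl⟩ := List.map_eq_cons_iff.1 hw
      obtain ⟨ht, hsrc, hin, hnin, hl⟩ := hl
      exact ⟨p.1, ht, hsrc, rfl, hin, hnin, ih.2 ⟨l, rfl, hl, hF⟩⟩

theorem mem_lang_iff_exists_executes {w : DataWord Sigma} :
    w ∈ A.Lang ↔ ∃ q ∈ A.I, ∃ l, traceWord l = w ∧ A.Executes q (fun _ ↦ ∅) l ∧
      finalState q l ∈ A.F :=
  exists_congr fun _ ↦ and_congr_right fun _ ↦ accepts_iff_exists_executes

end Traces

section Holders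

/-- The registers of `A` that contain the data value `d`. -/
def holders (f : ℕ → Finset ℕ) (d : ℕ) : Set A.R :=
  {r | d ∈ f r}

/-- The registers that contain a value after the transition `t`, provided that this value differs
from the one read and that `S` is the set of registers that contained it before. -/
def carry (t : RsATrans Sigma) (S : Set A.R) : Set A.R :=
  {r | ∃ r' ∈ S, some (r' : ℕ) ∈ t.upd r}

/-- The composition of the maps `RsA.carry` along a trace. -/
def carryAll (l : List (RsATrans Sigma × ℕ)) (S : Set A.R) : Set A.R :=
  l.foldl (fun S p ↦ A.carry p.1 S) S

variable {A} {f g : ℕ → Finset ℕ} {l : List (RsATrans Sigma × ℕ)} {q x : ℕ}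

theorem holders_empty : A.holders (fun _ ↦ ∅) x = ∅ := by
  simp [holders]

theorem carry_union (t : RsATrans Sigma) (S T : Set A.R) :
    A.carry t (S ∪ T) = A.carry t S ∪ A.carry t T := by
  ext r
  simp only [carry, Set.mem_union, Set.mem_ofPred_eq, or_and_right, exists_or]

theorem carryAll_append (l₁ l₂ : List (RsATrans Sigma × ℕ)) (S : Set A.R) :
    A.carryAll (l₁ ++ l₂) S = A.carryAll l₂ (A.carryAll l₁ S) :=
  List.foldl_append

theorem carryAll_empty (l : List (RsATrans Sigma × ℕ)) : A.carryAll l ∅ = ∅ := by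
  induction l with
  | nil => rfl
  | cons p l ih => simpa [carryAll, carry] using ih

theorem carryAll_union (l : List (RsATrans Sigma × ℕ)) (S T : Set A.R) :
    A.carryAll l (S ∪ T) = A.carryAll l S ∪ A.carryAll l T := by
  induction l generalizing S T with
  | nil => rfl
  | cons p l ih => simpa [carryAll, carry_union] using ih _ _

theorem carryAll_map_data (π : ℕ → ℕ) (l : List (RsATrans Sigma × ℕ)) (S : Set A.R) :
    A.carryAll (l.map (Prod.map id π)) S = A.carryAll l S := by
  simp [carryAll, List.foldl_map]

theorem holders_apply {t : RsATrans Sigma} (ht : t ∈ A.Δ) (f : ℕ → Finset ℕ) (d x : ℕ) :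
    A.holders (t.apply f d) x =
      A.carry t (A.holders f x) ∪ {r | x = d ∧ none ∈ t.upd r} := by
  ext r
  have hR : ∀ r', some r' ∈ t.upd r → r' ∈ A.R := (A.wf t ht).2.2.2.2.2 r r.2
  simp only [holders, carry, RsATrans.apply, Set.mem_union, Set.mem_ofPred_eq,
    Finset.mem_biUnion, Option.exists, Finset.mem_singleton, Subtype.exists]
  grind

theorem holders_finalRegs_of_notMem (hl : ∀ p ∈ l, p.1 ∈ A.Δ) (hx : x ∉ l.map Prod.snd) :
    A.holders (finalRegs f l) x = A.carryAll l (A.holders f x) := by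
  induction l generalizing f with
  | nil => rfl
  | cons p l ih =>
    obtain ⟨hp, hl⟩ := List.forall_mem_cons.1 hl
    obtain ⟨hxp, hxl⟩ : x ≠ p.2 ∧ x ∉ l.map Prod.snd := by simpa using hx
    calc A.holders (finalRegs (p.1.apply f p.2) l) x
      _ = A.carryAll l (A.holders (p.1.apply f p.2) x) := ih hl hxl
      _ = A.carryAll l (A.carry p.1 (A.holders f x)) := by simp [holders_apply hp, hxp]

theorem Executes.holders_finalRegs_eq_empty (h : A.Executes q (fun _ ↦ ∅) l)
    (hx : x ∉ l.map Prod.snd) : A.holders (finalRegs (fun _ ↦ ∅) l) x = ∅ := by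
  rw [holders_finalRegs_of_notMem h.mem_transitions hx, holders_empty, carryAll_empty]

theorem holders_finalRegs_congr (hl : ∀ p ∈ l, p.1 ∈ A.Δ)
    (h : A.carryAll l (A.holders f x) = A.carryAll l (A.holders g x)) :
    A.holders (finalRegs f l) x = A.holders (finalRegs g l) x := by
  induction l generalizing f g with
  | nil => exact h
  | cons p l ih =>
    obtain ⟨hp, hl⟩ := List.forall_mem_cons.1 hl
    refine ih hl ?_
    rw [holders_apply hp, holders_apply hp, carryAll_union, carryAll_union]
    exact congrArg (· ∪ _) h

theorem Executes.map_data {π : ℕ → ℕ} (hπ : π.Injective) (h : A.Executes q f l)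
    (hfg : ∀ x ∈ l.map Prod.snd, A.holders g (π x) = A.holders f x) :
    A.Executes q g (l.map (Prod.map id π)) := by
  induction l generalizing q f g with
  | nil => trivial
  | cons p l ih =>
    obtain ⟨hp, hsrc, hin, hnin, hl⟩ := h
    obtain ⟨hfgp, hfgl⟩ := List.forall_mem_cons.1 hfg
    have hmem : ∀ r ∈ A.R, π p.2 ∈ g r ↔ p.2 ∈ f r := fun r hr ↦
      Set.ext_iff.1 hfgp ⟨r, hr⟩
    obtain ⟨-, -, hinR, hninR, -⟩ := A.wf _ hp
    refine ⟨hp, hsrc, fun r hr ↦ (hmem r (hinR hr)).2 (hin r hr),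
      fun r hr ↦ mt (hmem r (hninR hr)).1 (hnin r hr), ih hl fun x hx ↦ ?_⟩
    simp [holders_apply hp, hfgl x hx, hπ.eq_iff]

theorem Executes.congr (h : A.Executes q f l)
    (hfg : ∀ x ∈ l.map Prod.snd, A.holders g x = A.holders f x) : A.Executes q g l := by
  simpa using h.map_data Function.injective_id hfg

end Holders

section Pumping

variable {A} {q : ℕ} {f : ℕ → Finset ℕ} {u v z y : List (RsATrans Sigma × ℕ)} {π : ℕ → ℕ}

theorem finalState_pump (π : ℕ → ℕ) (hstate : finalState q (u ++ v) = finalState q u) :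
    finalState q (u ++ v ++ v.map (Prod.map id π)) = finalState q (u ++ v) := by
  rw [finalState_append, finalState_map_data, hstate, ← finalState_append, hstate]

theorem holders_finalRegs_pump {x : ℕ} (hv : ∀ p ∈ v.map (Prod.map id π), p.1 ∈ A.Δ)
    (hz : ∀ p ∈ z, p.1 ∈ A.Δ) (hcarry : A.carryAll (v ++ z) = A.carryAll z)
    (hx : x ∉ (v.map (Prod.map id π)).map Prod.snd) :
    A.holders (finalRegs f (v.map (Prod.map id π) ++ z)) x = A.holders (finalRegs f z) x := by
  rw [finalRegs_append]
  refine holders_finalRegs_congr hz ?_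
  calc A.carryAll z (A.holders (finalRegs f (v.map (Prod.map id π))) x)
    _ = A.carryAll z (A.carryAll v (A.holders f x)) := by
      rw [holders_finalRegs_of_notMem hv hx, carryAll_map_data]
    _ = A.carryAll z (A.holders f x) := by rw [← carryAll_append, hcarry]

theorem Executes.append_map_data (h : A.Executes q (fun _ ↦ ∅) (u ++ v))
    (hdisj : (u.map Prod.snd).Disjoint (v.map Prod.snd))
    (hstate : finalState q (u ++ v) = finalState q u) (hπ : π.Injective)
    (hfresh : ∀ x ∈ v.map Prod.snd, π x ∉ (u ++ v).map Prod.snd) :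
    A.Executes q (fun _ ↦ ∅) (u ++ v ++ v.map (Prod.map id π)) := by
  obtain ⟨hu, hv⟩ := executes_append_iff.1 h
  refine executes_append_iff.2 ⟨h, hstate ▸ hv.map_data hπ fun x hx ↦ ?_⟩
  rw [h.holders_finalRegs_eq_empty (hfresh x hx),
    hu.holders_finalRegs_eq_empty fun hxu ↦ hdisj hxu hx]

/-- The hypothesis `hcarry` makes the effect of the copy of `v` on the old values invisible once `z`
has been executed. -/
theorem Executes.pump (h : A.Executes q (fun _ ↦ ∅) (u ++ v ++ z ++ y))
    (hnodup : ((u ++ v ++ z).map Prod.snd).Nodup)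
    (hstate : finalState q (u ++ v) = finalState q u)
    (hcarry : A.carryAll (v ++ z) = A.carryAll z) (hπ : π.Injective)
    (hfresh : ∀ x ∈ v.map Prod.snd, π x ∉ (u ++ v ++ z ++ y).map Prod.snd) :
    A.Executes q (fun _ ↦ ∅) (u ++ v ++ v.map (Prod.map id π) ++ z ++ y) := by
  simp only [executes_append_iff (l₂ := y), executes_append_iff (l₂ := z)] at h
  obtain ⟨⟨huv, hz⟩, hy⟩ := h
  rw [List.map_append, List.nodup_append'] at hnodup
  obtain ⟨huv_nodup, -, hdisj⟩ := hnodup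
  rw [List.map_append, List.nodup_append'] at huv_nodup
  simp only [List.map_append, List.mem_append, not_or] at hfresh
  have hold : ∀ x, x ∈ z.map Prod.snd ∨ x ∈ y.map Prod.snd →
      x ∉ (v.map (Prod.map id π)).map Prod.snd := by
    simp only [List.map_map, List.mem_map, Function.comp_apply, Prod.map_snd]
    grind
  set v' := v.map (Prod.map id π)
  have hstate' : finalState q (u ++ v ++ v') = finalState q (u ++ v) := finalState_pump π hstate
  have huvv' : A.Executes q (fun _ ↦ ∅) (u ++ v ++ v') :=
    huv.append_map_data huv_nodup.2.2 hstate hπ fun x hx ↦ by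
      simpa only [List.map_append, List.mem_append, not_or] using (hfresh x hx).1.1
  have hz' : A.Executes (finalState q (u ++ v ++ v')) (finalRegs (fun _ ↦ ∅) (u ++ v ++ v'))
      z := by
    rw [hstate']
    refine hz.congr fun x hx ↦ ?_
    have hx_uv : x ∉ (u ++ v).map Prod.snd := fun hx' ↦ hdisj hx' hx
    have hx_uvv' : x ∉ (u ++ v ++ v').map Prod.snd := by
      rw [List.map_append, List.mem_append, not_or]
      exact ⟨hx_uv, hold x (.inl hx)⟩
    rw [huvv'.holders_finalRegs_eq_empty hx_uvv', huv.holders_finalRegs_eq_empty hx_uv]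
  have hy' : A.Executes (finalState q (u ++ v ++ v' ++ z))
      (finalRegs (fun _ ↦ ∅) (u ++ v ++ v' ++ z)) y := by
    rw [finalState_append, hstate', ← finalState_append]
    refine hy.congr fun x hx ↦ ?_
    rw [List.append_assoc, finalRegs_append (l₁ := u ++ v), finalRegs_append (l₁ := u ++ v)]
    exact holders_finalRegs_pump (executes_append_iff.1 huvv').2.mem_transitions
      hz.mem_transitions hcarry (hold x (.inr hx))
  exact executes_append_iff.2 ⟨executes_append_iff.2 ⟨huvv', hz'⟩, hy'⟩

variable (A) in
theorem pumping_lemma :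
    ∃ n, ∀ w₁ w₂ : DataWord Sigma, w₁ ++ w₂ ∈ A.Lang → (w₁.map Prod.snd).Nodup →
      n ≤ w₁.length → ∃ u v z, u ++ v ++ z = w₁ ∧ v ≠ [] ∧ ∀ π : ℕ → ℕ, π.Injective →
        (∀ x ∈ v.map Prod.snd, π x ∉ (w₁ ++ w₂).map Prod.snd) →
        u ++ v ++ v.map (Prod.map id π) ++ z ++ w₂ ∈ A.Lang := by
  classical
  refine ⟨(A.Q ×ˢ (Finset.univ : Finset (Set A.R → Set A.R))).card,
    fun w₁ w₂ hmem hnodup hcard ↦ ?_⟩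
  obtain ⟨q, hq, l, hlw, hl, hF⟩ := mem_lang_iff_exists_executes.1 hmem
  obtain ⟨l₁, y, rfl, rfl, rfl⟩ : ∃ l₁ y, l = l₁ ++ y ∧ traceWord l₁ = w₁ ∧ traceWord y = w₂ :=
    List.map_eq_append_iff.1 hlw
  have hkey : ∀ u v, u ++ v = l₁ →
      (finalState q u, A.carryAll v) ∈ A.Q ×ˢ (Finset.univ : Finset (Set A.R → Set A.R)) := by
    rintro u v rfl
    simp only [executes_append_iff] at hl
    simpa using hl.1.1.finalState_mem (A.I_sub hq)
  obtain ⟨u, v, z, rfl, hv, hkey_eq⟩ :=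
    exists_append_append_of_card_le_length _ hkey (by simpa [traceWord] using hcard)
  obtain ⟨hstate, hcarry⟩ := Prod.mk.inj hkey_eq
  refine ⟨traceWord u, traceWord v, traceWord z, by simp [traceWord], by simpa [traceWord],
    fun π hπ hfresh ↦ mem_lang_iff_exists_executes.2 ⟨q, hq,
      u ++ v ++ v.map (Prod.map id π) ++ z ++ y, by simp [traceWord], ?_, ?_⟩⟩
  · rw [← traceWord_append] at hfresh
    simp only [map_snd_traceWord] at hnodup hfresh
    exact hl.pump hnodup hstate.symm hcarry hπ hfresh
  · rwa [finalState_append (l₂ := y), finalState_append (l₂ := z), finalState_pump π hstate.symm,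
      ← finalState_append (l₂ := z), ← finalState_append (l₂ := y)]

end Pumping

end RsA

theorem RsA.lang_ne_LallRep (A : RsA Unit) : A.Lang ≠ LallRep := by
  intro hA
  obtain ⟨n, hn⟩ := A.pumping_lemma
  set w : DataWord Unit := (List.range n).map ((), ·)
  have map_w : w.map Prod.snd = List.range n := by simp [w, Function.comp_def]
  have hnodup : (w.map Prod.snd).Nodup := map_w ▸ List.nodup_range
  have hww : w ++ w ∈ A.Lang := by
    rw [hA, mem_LallRep_iff]
    intro d
    simp only [List.map_append, List.count_append]
    omega
  obtain ⟨u, v, z, hw, hv, hpump⟩ := hn w w hww hnodup (by simp [w])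
  have hfresh : ∀ x, x + n ∉ w.map Prod.snd := by simp [map_w]
  have hmem := hpump (· + n) (add_left_injective n) (by simp [hfresh])
  rw [hA, mem_LallRep_iff] at hmem
  obtain ⟨d, hd⟩ := List.exists_mem_of_ne_nil (v.map Prod.snd) (by simpa)
  refine hmem (d + n) ?_
  have hcount : (v.map Prod.snd).count d = 1 :=
    List.count_eq_one_of_mem (hnodup.sublist (by simp [← hw])) hd
  have hcopy : ((v.map (Prod.map id (· + n))).map Prod.snd).count (d + n) = 1 := by
    have hmap : (v.map (Prod.map id (· + n))).map Prod.snd = (v.map Prod.snd).map (· + n) := by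
      simp [Function.comp_def]
    rw [hmap, List.count_map_of_injective _ (· + n) (add_left_injective n), hcount]
  have hcount_w : (w.map Prod.snd).count (d + n) = 0 := List.count_eq_zero.2 (hfresh d)
  simp only [← hw, List.map_append, List.count_append] at hcount_w hcopy ⊢
  omega

/-- RsA languages are not closed under complement: over the unary
alphabet, `LnegAllRep` is recognized by an RsA with one register, `LallRep` is its
complement, and no RsA recognizes `LallRep`. -/
theorem rsa_not_closed_under_complement :
    (∃ A : RsA Unit, A.R.card = 1 ∧ RsA.Lang A = LnegAllRep) ∧
    LallRep = LnegAllRepᶜ ∧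
    ¬ ∃ A : RsA Unit, RsA.Lang A = LallRep := by
  refine ⟨⟨RsA.uniqueValueGuesser, Finset.card_singleton 0, RsA.lang_uniqueValueGuesser⟩,
    LallRep_eq_compl_LnegAllRep, ?_⟩
  rintro ⟨A, hA⟩
  exact A.lang_ne_LallRep hA
end

section
/- The class of languages recognized by deterministic register set automata is closed under union, intersection, and complement: for any two DRsAs A₁ and A₂ over the same alphabet Σ, there exist DRsAs recognizing L(A₁) ∪ L(A₂), L(A₁) ∩ L(A₂), and the complement of L(A₁). -/
/-- An RsA is deterministic (a DRsA) iff any two distinct transitions from the same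
state over the same letter have incompatible guards. -/
def RsA.Deterministic {Sigma : Type} (A : RsA Sigma) : Prop :=
  ∀ t₁ ∈ A.Δ, ∀ t₂ ∈ A.Δ, t₁ ≠ t₂ → t₁.src = t₂.src → t₁.letter = t₂.letter →
    (t₁.gIn ∩ t₂.gNin).Nonempty ∨ (t₂.gIn ∩ t₁.gNin).Nonempty

/-!
Both directions of the argument pass through *complete* deterministic automata, whose next
configuration is a function of the current one. Since the guards of a transition only test which
registers contain the input value, such an automaton is given by functions of the state, the letter
and the set of registers containing the input; running finitely many of them side by side, on
disjoint sets of registers, and combining their verdicts realizes every Boolean combination of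
their languages.

A DRsA with a fixed initial state is completed by tracking the set of its current configurations,
which has at most one element; the language of a DRsA is the finite union over its initial states.
Conversely, a complete automaton over a finite alphabet is a DRsA once every test of the registers
is spelled out as a guard mentioning all registers: two different guards are then incompatible.
-/

/-- A complete deterministic register set automaton with states `σ` and registers `ρ`. The
transition taken on a letter is determined by the set `G` of those registers that contain the
current data value. As in `RsATrans`, `none` stands for the current data value in an update. -/
structure CompleteDRsA (α σ ρ : Type*) where
  next : σ → α → Set ρ → σ
  upd : σ → α → Set ρ → ρ → Set (Option ρ)
  start : σ
  accept : Set σ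

namespace CompleteDRsA

section Semantics

variable {α σ ρ D : Type*} (M : CompleteDRsA α σ ρ)

/-- The successor of a configuration on reading the letter and data value `x`. -/
def step (c : σ × (ρ → Set D)) (x : α × D) : σ × (ρ → Set D) :=
  let G := {r | x.2 ∈ c.2 r}
  (M.next c.1 x.1 G, fun r => ⋃ o ∈ M.upd c.1 x.1 G r, o.elim {x.2} c.2)

/-- The configuration reached from `c` after reading a word. -/
def evalFrom (c : σ × (ρ → Set D)) (w : List (α × D)) : σ × (ρ → Set D) :=
  w.foldl M.step c

/-- The language of a complete automaton; as for an `RsA`, all registers are initially empty. -/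
def accepts : Set (List (α × D)) :=
  {w | (M.evalFrom (M.start, fun _ => ∅) w).1 ∈ M.accept}

/-- A language is recognizable if it is the language of a complete automaton with finitely many
states and registers. -/
def Recognizable (L : Set (List (α × D))) : Prop :=
  ∃ (σ ρ : Type) (_ : Finite σ) (_ : Finite ρ) (M : CompleteDRsA α σ ρ), M.accepts = L

end Semantics

section BooleanCombinations

variable {ι α D : Type*} {σ ρ : ι → Type*}

/-- The automata `M i` run side by side on disjoint sets of registers; a word is accepted if `P`
holds of the set of indices whose automaton accepts it. -/
def boolComb (M : ∀ i, CompleteDRsA α (σ i) (ρ i)) (P : Set ι → Prop) :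
    CompleteDRsA α (∀ i, σ i) (Σ i, ρ i) where
  next s a G i := (M i).next (s i) a (Sigma.mk i ⁻¹' G)
  upd s a G p := Option.map (Sigma.mk p.1) '' (M p.1).upd (s p.1) a (Sigma.mk p.1 ⁻¹' G) p.2
  start i := (M i).start
  accept := {s | P {i | s i ∈ (M i).accept}}

/-- The configuration of `boolComb` made up of one configuration of each component. -/
def joinConfigs (c : ∀ i, σ i × (ρ i → Set D)) : (∀ i, σ i) × ((Σ i, ρ i) → Set D) :=
  (fun i => (c i).1, fun p => (c p.1).2 p.2)

variable (M : ∀ i, CompleteDRsA α (σ i) (ρ i)) (P : Set ι → Prop)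

lemma step_boolComb_joinConfigs (c : ∀ i, σ i × (ρ i → Set D)) (x : α × D) :
    (boolComb M P).step (joinConfigs c) x = joinConfigs fun i => (M i).step (c i) x := by
  refine Prod.ext rfl (funext fun p => ?_)
  simp only [step, boolComb, joinConfigs, Set.biUnion_image, Option.elim_map]
  rfl

lemma evalFrom_boolComb_joinConfigs (c : ∀ i, σ i × (ρ i → Set D)) (w : List (α × D)) :
    (boolComb M P).evalFrom (joinConfigs c) w =
      joinConfigs fun i => (M i).evalFrom (c i) w := by
  induction w generalizing c with
  | nil => rfl
  | cons x w ih =>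
    simp only [evalFrom, List.foldl_cons, step_boolComb_joinConfigs]
    exact ih _

lemma accepts_boolComb :
    (boolComb M P).accepts = {w : List (α × D) | P {i | w ∈ (M i).accepts}} := by
  ext w
  have eval_start := evalFrom_boolComb_joinConfigs M P (fun i => ((M i).start, fun _ => ∅)) w
  exact iff_of_eq (congrArg (fun c => c.1 ∈ (boolComb M P).accept) eval_start)

lemma Recognizable.boolComb {ι : Type} [Finite ι] {L : ι → Set (List (α × D))}
    (hL : ∀ i, Recognizable (L i)) (P : Set ι → Prop) :
    Recognizable {w | P {i | w ∈ L i}} := by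
  choose σ ρ _ _ M hM using hL
  refine ⟨∀ i, σ i, Σ i, ρ i, inferInstance, inferInstance, CompleteDRsA.boolComb M P, ?_⟩
  simp only [accepts_boolComb, hM]

end BooleanCombinations

end CompleteDRsA

lemma RsATrans.coe_apply {α : Type} (t : RsATrans α) (f : ℕ → Finset ℕ) (d r : ℕ) :
    (t.apply f d r : Set ℕ) = ⋃ o ∈ t.upd r, o.elim {d} fun r' => (f r' : Set ℕ) := by
  simp only [RsATrans.apply, Finset.coe_biUnion, Finset.mem_coe]
  refine Set.iUnion₂_congr fun o _ => ?_
  cases o <;> simp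

namespace RsA

variable {α : Type} (A : RsA α)

/-- The transitions that can fire from the configuration `c` on reading `x`. -/
def firing (c : ℕ × (ℕ → Finset ℕ)) (x : α × ℕ) : Set (RsATrans α) :=
  {t ∈ A.Δ | t.src = c.1 ∧ t.letter = x.1 ∧ (∀ r ∈ t.gIn, x.2 ∈ c.2 r) ∧
    ∀ r ∈ t.gNin, x.2 ∉ c.2 r}

/-- The configurations reachable from `C` in one step on reading `x`. -/
def post (C : Set (ℕ × (ℕ → Finset ℕ))) (x : α × ℕ) : Set (ℕ × (ℕ → Finset ℕ)) :=
  {c' | ∃ c ∈ C, A.Step c x c'}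

/-- The transitions from a state in `S` on the letter `a` whose guards are met when `G` is the set
of registers containing the input. -/
def enabled (S : Set A.Q) (a : α) (G : Set A.R) : Set (RsATrans α) :=
  {t ∈ A.Δ | (∃ q ∈ S, t.src = q) ∧ t.letter = a ∧ (∀ r : A.R, r.1 ∈ t.gIn → r ∈ G) ∧
    ∀ r : A.R, r.1 ∈ t.gNin → r ∉ G}

/-- The completion of `A` with initial state `q₀`. Its states are sets of states of `A`; when `A` is
deterministic only subsingletons are reached, so that one copy of the registers suffices. -/
def completion (q₀ : A.Q) : CompleteDRsA α (Set A.Q) A.R where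
  next S a G := {q | ∃ t ∈ A.enabled S a G, t.tgt = q}
  upd S a G r := ⋃ t ∈ A.enabled S a G, {o | o.map Subtype.val ∈ t.upd r}
  start := {q₀}
  accept := {S | ∃ q ∈ S, q.1 ∈ A.F}

/-- The configuration of the completion that stands for a set `C` of configurations of `A`. -/
def mergeConfigs (C : Set (ℕ × (ℕ → Finset ℕ))) : Set A.Q × (A.R → Set ℕ) :=
  ({q | ∃ c ∈ C, c.1 = q}, fun r => ⋃ c ∈ C, (c.2 r : Set ℕ))

variable {A}

lemma post_singleton (c : ℕ × (ℕ → Finset ℕ)) (x : α × ℕ) :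
    A.post {c} x = (fun t => (t.tgt, t.apply c.2 x.2)) '' A.firing c x := by
  ext c'
  simp only [post, Step, firing, Set.mem_singleton_iff, exists_eq_left, Set.mem_ofPred_eq,
    Set.mem_image, and_assoc, eq_comm (a := c')]

lemma mem_foldl_post {C : Set (ℕ × (ℕ → Finset ℕ))} {w : DataWord α}
    {c' : ℕ × (ℕ → Finset ℕ)} : c' ∈ w.foldl A.post C ↔ ∃ c ∈ C, A.Run c w c' := by
  induction w generalizing C with
  | nil =>
    refine ⟨fun h => ⟨c', h, .nil c'⟩, ?_⟩
    rintro ⟨_, h, ⟨⟩⟩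
    exact h
  | cons x w ih =>
    rw [List.foldl_cons, ih]
    constructor
    · rintro ⟨d, ⟨c, hc, hstep⟩, hrun⟩
      exact ⟨c, hc, .cons hstep hrun⟩
    · rintro ⟨c, hc, _ | ⟨hstep, hrun⟩⟩
      exact ⟨_, ⟨c, hc, hstep⟩, hrun⟩

lemma Deterministic.firing_subsingleton (hA : A.Deterministic) (c : ℕ × (ℕ → Finset ℕ))
    (x : α × ℕ) : (A.firing c x).Subsingleton := by
  rintro t ⟨ht, hsrc, hletter, hin, hnin⟩ t' ⟨ht', hsrc', hletter', hin', hnin'⟩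
  by_contra hne
  rcases hA t ht t' ht' hne (hsrc.trans hsrc'.symm) (hletter.trans hletter'.symm) with
    ⟨r, hr⟩ | ⟨r, hr⟩ <;> rw [Finset.mem_inter] at hr
  · exact hnin' r hr.2 (hin r hr.1)
  · exact hnin r hr.2 (hin' r hr.1)

lemma Deterministic.post_subsingleton (hA : A.Deterministic) {C : Set (ℕ × (ℕ → Finset ℕ))}
    (hC : C.Subsingleton) (x : α × ℕ) : (A.post C x).Subsingleton := by
  rcases hC.eq_empty_or_singleton with rfl | ⟨c, rfl⟩
  · simp [post]
  · rw [post_singleton]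
    exact (hA.firing_subsingleton c x).image _

lemma mergeConfigs_singleton (c : ℕ × (ℕ → Finset ℕ)) :
    A.mergeConfigs {c} = ({q : A.Q | c.1 = q}, fun r : A.R => (c.2 r : Set ℕ)) := by
  simp [mergeConfigs]

lemma enabled_mergeConfigs_singleton (c : ℕ × (ℕ → Finset ℕ)) (x : α × ℕ) :
    A.enabled (A.mergeConfigs {c}).1 x.1 {r | x.2 ∈ (A.mergeConfigs {c}).2 r} =
      A.firing c x := by
  ext t
  refine and_congr_right fun ht => ?_
  obtain ⟨hsrc, -, hin, hnin, -⟩ := A.wf t ht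
  have src_iff : (∃ q : A.Q, c.1 = q ∧ t.src = q) ↔ t.src = c.1 := by
    constructor
    · rintro ⟨q, hc, ht⟩
      exact ht.trans hc.symm
    · exact fun h => ⟨⟨t.src, hsrc⟩, h.symm, rfl⟩
  simp only [mergeConfigs_singleton, Set.mem_ofPred_eq, Finset.mem_coe, Subtype.forall, src_iff]
  exact and_congr_right' (and_congr_right' (and_congr
    ⟨fun h r hr => h r (hin hr) hr, fun h r _ => h r⟩
    ⟨fun h r hr => h r (hnin hr) hr, fun h r _ => h r⟩))

lemma coe_apply_of_mem {t : RsATrans α} (ht : t ∈ A.Δ) (f : ℕ → Finset ℕ) (d : ℕ) (r : A.R) :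
    (t.apply f d r : Set ℕ) =
      ⋃ o ∈ {o : Option A.R | o.map Subtype.val ∈ t.upd r},
        o.elim {d} fun r' => (f r' : Set ℕ) := by
  obtain ⟨-, -, -, -, -, upd_sub⟩ := A.wf t ht
  ext v
  simp only [RsATrans.coe_apply, Set.mem_iUnion, exists_prop, Set.mem_ofPred_eq, Option.exists,
    Option.map_none, Option.map_some, Option.elim_none, Option.elim_some]
  refine or_congr_right ⟨?_, fun ⟨r', hr', hv⟩ => ⟨r', hr', hv⟩⟩
  rintro ⟨r', hr', hv⟩
  exact ⟨⟨r', upd_sub r r.2 r' hr'⟩, hr', hv⟩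

lemma step_completion_mergeConfigs_singleton (q₀ : A.Q) (c : ℕ × (ℕ → Finset ℕ)) (x : α × ℕ) :
    (A.completion q₀).step (A.mergeConfigs {c}) x = A.mergeConfigs (A.post {c} x) := by
  simp only [CompleteDRsA.step, completion, enabled_mergeConfigs_singleton]
  rw [mergeConfigs_singleton]
  simp only [mergeConfigs, post_singleton, Set.exists_mem_image, Set.biUnion_image,
    Set.biUnion_iUnion]
  exact Prod.ext rfl <| funext fun r => Set.iUnion₂_congr fun t ht =>
    (coe_apply_of_mem ht.1 c.2 x.2 r).symm

lemma step_completion_mergeConfigs (q₀ : A.Q) {C : Set (ℕ × (ℕ → Finset ℕ))}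
    (hC : C.Subsingleton) (x : α × ℕ) :
    (A.completion q₀).step (A.mergeConfigs C) x = A.mergeConfigs (A.post C x) := by
  rcases hC.eq_empty_or_singleton with rfl | ⟨c, rfl⟩
  · simp [CompleteDRsA.step, completion, enabled, mergeConfigs, post]
  · exact step_completion_mergeConfigs_singleton q₀ c x

lemma Deterministic.evalFrom_completion_mergeConfigs (hA : A.Deterministic) (q₀ : A.Q)
    {C : Set (ℕ × (ℕ → Finset ℕ))} (hC : C.Subsingleton) (w : DataWord α) :
    (A.completion q₀).evalFrom (A.mergeConfigs C) w = A.mergeConfigs (w.foldl A.post C) := by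
  induction w generalizing C with
  | nil => rfl
  | cons x w ih =>
    rw [List.foldl_cons, ← ih (hA.post_subsingleton hC x), ← step_completion_mergeConfigs q₀ hC]
    rfl

lemma Deterministic.accepts_completion (hA : A.Deterministic) (q₀ : A.Q) :
    (A.completion q₀).accepts =
      {w : DataWord α | ∃ c, A.Run (q₀, fun _ => ∅) w c ∧ c.1 ∈ A.F} := by
  ext w
  have start_eq : (({q₀}, fun _ => ∅) : Set A.Q × (A.R → Set ℕ)) =
      A.mergeConfigs {(q₀.1, fun _ => ∅)} := by
    simp [mergeConfigs_singleton, eq_comm (a := q₀), Set.ofPred_eq_eq_singleton]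
  change ((A.completion q₀).evalFrom ({q₀}, fun _ => ∅) w).1 ∈ (A.completion q₀).accept ↔ _
  rw [start_eq, hA.evalFrom_completion_mergeConfigs q₀ Set.subsingleton_singleton]
  simp only [completion, mergeConfigs, mem_foldl_post, Set.mem_singleton_iff, exists_eq_left,
    Set.mem_ofPred_eq]
  constructor
  · rintro ⟨q, ⟨c, hrun, hc⟩, hq⟩
    exact ⟨c, hrun, hc ▸ hq⟩
  · rintro ⟨c, hrun, hc⟩
    exact ⟨⟨c.1, A.F_sub hc⟩, ⟨c, hrun, rfl⟩, hc⟩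

lemma Deterministic.recognizable_lang (hA : A.Deterministic) :
    CompleteDRsA.Recognizable A.Lang := by
  have recognizable_from (q₀ : A.I) : CompleteDRsA.Recognizable
      {w : DataWord α | ∃ c, A.Run (q₀, fun _ => ∅) w c ∧ c.1 ∈ A.F} :=
    ⟨_, _, inferInstance, inferInstance, A.completion ⟨q₀, A.I_sub q₀.2⟩,
      hA.accepts_completion _⟩
  convert CompleteDRsA.Recognizable.boolComb recognizable_from Set.Nonempty
  ext w
  simp [Lang, Set.Nonempty]

end RsA

namespace CompleteDRsA

section Encoding

variable {α : Type} {σ ρ : Type*} [Finite ρ] (M : CompleteDRsA α σ ρ) (e : σ ↪ ℕ) (k : ρ ↪ ℕ)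

/-- The transition of `M` from state `s` on the letter `a` when `G` is the set of registers
containing the input, with states and registers encoded along `e` and `k`. Its guard mentions every
register. -/
noncomputable def toRsATrans (s : σ) (a : α) (G : Set ρ) : RsATrans α where
  src := e s
  letter := a
  gIn := (Set.toFinite (k '' G)).toFinset
  gNin := (Set.toFinite (k '' Gᶜ)).toFinset
  upd := Function.extend k (fun r => (Set.toFinite (Option.map k '' M.upd s a G r)).toFinset)
    fun _ => ∅
  tgt := e (M.next s a G)

/-- The register set automaton obtained from `M` by encoding states and registers along `e` and
`k`. -/
noncomputable def toRsA [Finite α] [Finite σ] : RsA α where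
  Q := (Set.finite_range e).toFinset
  R := (Set.finite_range k).toFinset
  Δ := Set.range fun p : σ × α × Set ρ => M.toRsATrans e k p.1 p.2.1 p.2.2
  I := {e M.start}
  F := (Set.toFinite (e '' M.accept)).toFinset
  finite_trans := Set.finite_range _
  I_sub := by simp
  F_sub := by simp
  wf := by
    rintro _ ⟨⟨s, a, G⟩, rfl⟩
    refine ⟨by simp [toRsATrans], by simp [toRsATrans], by simp [toRsATrans],
      by simp [toRsATrans], ?_, ?_⟩
    · simp only [toRsATrans]
      rw [Set.Finite.disjoint_toFinset, Set.disjoint_image_iff k.injective]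
      exact disjoint_compl_right
    · intro n hn n' hn'
      obtain ⟨r, rfl⟩ := (Set.Finite.mem_toFinset _).1 hn
      simp only [toRsATrans] at hn'
      rw [k.injective.extend_apply, Set.Finite.mem_toFinset] at hn'
      obtain ⟨o, -, ho⟩ := hn'
      obtain ⟨r', -, rfl⟩ := Option.map_eq_some_iff.1 ho
      simp

lemma toRsATrans_fires_iff {s : σ} {a : α} {G : Set ρ} {f : ℕ → Finset ℕ} {d : ℕ} :
    ((∀ n ∈ (M.toRsATrans e k s a G).gIn, d ∈ f n) ∧
      ∀ n ∈ (M.toRsATrans e k s a G).gNin, d ∉ f n) ↔ G = {r | d ∈ f (k r)} := by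
  simp only [toRsATrans, Set.Finite.mem_toFinset, Set.forall_mem_image, Set.mem_compl_iff,
    Set.ext_iff, Set.mem_ofPred_eq]
  grind

lemma step_coe_eq_toRsATrans (s : σ) (f : ℕ → Finset ℕ) (x : α × ℕ) :
    M.step (s, fun r => (f (k r) : Set ℕ)) x =
      (M.next s x.1 {r | x.2 ∈ f (k r)}, fun r =>
        ((M.toRsATrans e k s x.1 {r | x.2 ∈ f (k r)}).apply f x.2 (k r) : Set ℕ)) := by
  refine Prod.ext rfl (funext fun r => ?_)
  simp only [step, RsATrans.coe_apply, toRsATrans, k.injective.extend_apply,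
    Set.Finite.mem_toFinset, Set.biUnion_image, Option.elim_map]
  rfl

variable [Finite α] [Finite σ]

lemma toRsA_deterministic : (M.toRsA e k).Deterministic := by
  rintro _ ⟨⟨s, a, G⟩, rfl⟩ _ ⟨⟨s', a', G'⟩, rfl⟩ hne hsrc hletter
  obtain rfl : s = s' := e.injective hsrc
  obtain rfl : a = a' := hletter
  have hG : G ≠ G' := by
    rintro rfl
    exact hne rfl
  obtain ⟨r, ⟨hr, hr'⟩ | ⟨hr', hr⟩⟩ := Set.symmDiff_nonempty.2 hG
  · exact .inl ⟨k r, by simp [toRsATrans, hr, hr']⟩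
  · exact .inr ⟨k r, by simp [toRsATrans, hr, hr']⟩

lemma toRsA_step_iff {s : σ} {f : ℕ → Finset ℕ} {x : α × ℕ} {c : ℕ × (ℕ → Finset ℕ)} :
    (M.toRsA e k).Step (e s, f) x c ↔
      c = (e (M.next s x.1 {r | x.2 ∈ f (k r)}),
        (M.toRsATrans e k s x.1 {r | x.2 ∈ f (k r)}).apply f x.2) := by
  constructor
  · rintro ⟨_, ⟨⟨s', a, G⟩, rfl⟩, hsrc, hletter, hin, hnin, rfl⟩
    obtain rfl : s' = s := e.injective hsrc
    obtain rfl : a = x.1 := hletter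
    obtain rfl := (M.toRsATrans_fires_iff e k).1 ⟨hin, hnin⟩
    rfl
  · rintro rfl
    obtain ⟨hin, hnin⟩ := (M.toRsATrans_fires_iff e k (s := s) (a := x.1)).2
      (rfl : {r | x.2 ∈ f (k r)} = _)
    exact ⟨_, ⟨(s, x.1, _), rfl⟩, rfl, rfl, hin, hnin, rfl⟩

lemma toRsA_run_iff {s : σ} {f : ℕ → Finset ℕ} {w : DataWord α} :
    (∃ c, (M.toRsA e k).Run (e s, f) w c ∧ c.1 ∈ (M.toRsA e k).F) ↔
      (M.evalFrom (s, fun r => (f (k r) : Set ℕ)) w).1 ∈ M.accept := by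
  induction w generalizing s f with
  | nil =>
    have mem_F : e s ∈ (M.toRsA e k).F ↔ s ∈ M.accept := by simp [toRsA]
    refine Iff.trans ⟨?_, fun h => ⟨_, .nil _, h⟩⟩ mem_F
    rintro ⟨_, ⟨⟩, h⟩
    exact h
  | cons x w ih =>
    rw [evalFrom, List.foldl_cons, step_coe_eq_toRsATrans M e, ← evalFrom, ← ih]
    refine exists_congr fun c => and_congr_left fun _ => ⟨?_, fun h => ?_⟩
    · rintro (_ | ⟨hstep, hrun⟩)
      rwa [(M.toRsA_step_iff e k).1 hstep] at hrun
    · exact .cons ((M.toRsA_step_iff e k).2 rfl) h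

lemma lang_toRsA : (M.toRsA e k).Lang = M.accepts := by
  ext w
  have run_iff := M.toRsA_run_iff e k (s := M.start) (f := fun _ => ∅) (w := w)
  simp only [Finset.coe_empty] at run_iff
  rw [accepts, Set.mem_ofPred_eq, ← run_iff]
  simp [RsA.Lang, toRsA]

end Encoding

lemma Recognizable.exists_deterministic {α : Type} [Finite α] {L : Set (DataWord α)}
    (hL : Recognizable L) : ∃ A : RsA α, A.Deterministic ∧ A.Lang = L := by
  obtain ⟨σ, ρ, _, _, M, rfl⟩ := hL
  obtain ⟨e, he⟩ := exists_injective_nat σ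
  obtain ⟨k, hk⟩ := exists_injective_nat ρ
  exact ⟨M.toRsA ⟨e, he⟩ ⟨k, hk⟩, M.toRsA_deterministic _ _, M.lang_toRsA _ _⟩

end CompleteDRsA

lemma RsA.exists_deterministic_boolComb {α ι : Type} [Finite α] [Finite ι] {A : ι → RsA α}
    (hA : ∀ i, (A i).Deterministic) (P : Set ι → Prop) :
    ∃ B : RsA α, B.Deterministic ∧ B.Lang = {w | P {i | w ∈ (A i).Lang}} :=
  (CompleteDRsA.Recognizable.boolComb (fun i => (hA i).recognizable_lang) P).exists_deterministic

/-- DRsA languages are closed under union, intersection,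
and complement. -/
theorem drsa_closed_under_boolean_ops (Sigma : Type) [Fintype Sigma] [Nonempty Sigma]
    (A₁ A₂ : RsA Sigma) (h₁ : A₁.Deterministic) (h₂ : A₂.Deterministic) :
    (∃ A : RsA Sigma, A.Deterministic ∧ RsA.Lang A = RsA.Lang A₁ ∪ RsA.Lang A₂) ∧
    (∃ A : RsA Sigma, A.Deterministic ∧ RsA.Lang A = RsA.Lang A₁ ∩ RsA.Lang A₂) ∧
    (∃ A : RsA Sigma, A.Deterministic ∧ RsA.Lang A = (RsA.Lang A₁)ᶜ) := by
  have boolComb :=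
    RsA.exists_deterministic_boolComb (A := ![A₁, A₂]) (Fin.forall_fin_two.2 ⟨h₁, h₂⟩)
  exact ⟨boolComb fun s => 0 ∈ s ∨ 1 ∈ s, boolComb fun s => 0 ∈ s ∧ 1 ∈ s,
    boolComb fun s => 0 ∉ s⟩
end

section
/- For every nondeterministic register automaton with at most one register and no disequality guards (every transition has g≠ = ∅), there exists a deterministic register set automaton recognizing the same language. -/
/-!
The proof is a subset construction. With a single register and no disequality guards, a set of
configurations can be summarised by the states occurring in it together with, for each state, the
set of values its register may hold there: an unguarded transition can fire whatever the register
holds, and a guarded one can fire from some configuration in its source state iff the input is one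
of the values collected for that state. So the deterministic automaton has the sets of states as
its states and one set register per state of the given automaton. On input `d` it tests every one
of its registers for `d`, which makes its guards exclusive.

A guarded transition that keeps its register can fire only from register content `d`, so it has to
contribute `{d}` rather than all values collected for its source.
-/

theorem RsATrans.mem_apply_s14 {Sigma : Type} {t : RsATrans Sigma} {f : ℕ → Finset ℕ} {d r v : ℕ} :
    v ∈ t.apply f d r ↔ none ∈ t.upd r ∧ v = d ∨ ∃ r', some r' ∈ t.upd r ∧ v ∈ f r' := by
  simp [RsATrans.apply, Option.exists]

namespace NRA

/-- A configuration of a register automaton: a state and a register assignment. -/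
abbrev Config : Type := ℕ × (ℕ → Option ℕ)

variable {Sigma : Type}

/-- The initial configurations: an initial state, with all registers empty. -/
def initial (A : NRA Sigma) : Set Config :=
  {c | c.1 ∈ A.I ∧ c.2 = fun _ => none}

/-- The successors, on reading the letter `x`, of the configurations in `C`. -/
def post (A : NRA Sigma) (C : Set Config) (x : Sigma × ℕ) : Set Config :=
  {c' | ∃ c ∈ C, A.Step c x c'}

/-- `A.IsSubsetSimulation D Rel` says that `D` simulates the subset construction of `A`, where
`Rel C k` relates a set `C` of configurations of `A` to the configuration `k` of `D` encoding it.
Since `D` may get stuck once no configuration of `A` is left, only steps to a nonempty set have to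
be matched. -/
structure IsSubsetSimulation (A : NRA Sigma) (D : RsA Sigma)
    (Rel : Set Config → ℕ × (ℕ → Finset ℕ) → Prop) : Prop where
  nonempty_init : D.I.Nonempty
  init : ∀ q₀ ∈ D.I, Rel A.initial (q₀, fun _ => ∅)
  final : ∀ {C k}, Rel C k → (k.1 ∈ D.F ↔ ∃ c ∈ C, c.1 ∈ A.F)
  step : ∀ {C k x k'}, Rel C k → D.Step k x k' → Rel (A.post C x) k'
  exists_step : ∀ {C k x}, Rel C k → (A.post C x).Nonempty → ∃ k', D.Step k x k'

namespace IsSubsetSimulation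

variable {A : NRA Sigma} {D : RsA Sigma} {Rel : Set Config → ℕ × (ℕ → Finset ℕ) → Prop}

theorem exists_accepting_run_iff (h : A.IsSubsetSimulation D Rel) (w : DataWord Sigma)
    {C : Set Config} {k : ℕ × (ℕ → Finset ℕ)} (hk : Rel C k) :
    (∃ k', D.Run k w k' ∧ k'.1 ∈ D.F) ↔ ∃ c ∈ C, ∃ c', A.Run c w c' ∧ c'.1 ∈ A.F := by
  induction w generalizing C k with
  | nil =>
    constructor
    · rintro ⟨_, ⟨⟩, hF⟩
      obtain ⟨c, hc, hcF⟩ := (h.final hk).1 hF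
      exact ⟨c, hc, c, .nil c, hcF⟩
    · rintro ⟨c, hc, _, ⟨⟩, hcF⟩
      exact ⟨k, .nil k, (h.final hk).2 ⟨c, hc, hcF⟩⟩
  | cons x w ih =>
    constructor
    · rintro ⟨k', _ | ⟨hstep, hrun⟩, hF⟩
      obtain ⟨c₁, ⟨c, hc, hcc₁⟩, c', hrun', hcF⟩ := (ih (h.step hk hstep)).1 ⟨k', hrun, hF⟩
      exact ⟨c, hc, c', .cons hcc₁ hrun', hcF⟩
    · rintro ⟨c, hc, c', _ | ⟨hstep, hrun⟩, hcF⟩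
      obtain ⟨k₁, hkk₁⟩ := h.exists_step hk ⟨_, c, hc, hstep⟩
      obtain ⟨k', hrun', hF⟩ := (ih (h.step hk hkk₁)).2 ⟨_, ⟨c, hc, hstep⟩, c', hrun, hcF⟩
      exact ⟨k', .cons hkk₁ hrun', hF⟩

theorem lang_eq (h : A.IsSubsetSimulation D Rel) : D.Lang = A.Lang := by
  ext w
  constructor
  · rintro ⟨q₀, hq₀, hrun⟩
    obtain ⟨⟨q, _⟩, ⟨hq, rfl⟩, hrun'⟩ := (h.exists_accepting_run_iff w (h.init q₀ hq₀)).1 hrun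
    exact ⟨q, hq, hrun'⟩
  · rintro ⟨q, hq, hrun⟩
    obtain ⟨q₀, hq₀⟩ := h.nonempty_init
    exact ⟨q₀, hq₀, (h.exists_accepting_run_iff w (h.init q₀ hq₀)).2 ⟨_, ⟨hq, rfl⟩, hrun⟩⟩

end IsSubsetSimulation

/-- The value `v` is stored in some register of `A` under the assignment `f`. -/
def Stored (A : NRA Sigma) (f : ℕ → Option ℕ) (v : ℕ) : Prop :=
  ∃ r ∈ A.R, f r = some v

/-- After firing `t`, the current input is stored: a register has just been loaded with it, or a
register is copied under an equality guard. In the second case the copied value is the input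
because `A` is meant to have a single register. -/
def StoresInput (A : NRA Sigma) (t : NRATrans Sigma) : Prop :=
  ∃ r ∈ A.R, t.upd r = .input ∨ t.gEq.Nonempty ∧ ∃ r', t.upd r = .reg r'

/-- The transition `t` is unguarded and copies a register, so that an arbitrary stored value
survives it. -/
def Preserves (A : NRA Sigma) (t : NRATrans Sigma) : Prop :=
  t.gEq = ∅ ∧ ∃ r ∈ A.R, ∃ r', t.upd r = .reg r'

section OneRegister

variable {A : NRA Sigma} {t : NRATrans Sigma} {f : ℕ → Option ℕ} {d v r : ℕ}

theorem Stored.eq_some (hreg : A.R.card ≤ 1) (hv : A.Stored f v) (hr : r ∈ A.R) :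
    f r = some v := by
  obtain ⟨r', hr', hv⟩ := hv
  rwa [Finset.card_le_one.1 hreg r hr r' hr']

theorem Stored.unique (hreg : A.R.card ≤ 1) (hv : A.Stored f v) (hd : A.Stored f d) : v = d := by
  obtain ⟨r, hr, hv⟩ := hv
  exact Option.some_injective _ (hv.symm.trans (hd.eq_some hreg hr))

theorem eqGuard_iff (hreg : A.R.card ≤ 1) (ht : t ∈ A.Δ) :
    (∀ r ∈ t.gEq, f r = some d) ↔ (t.gEq.Nonempty → A.Stored f d) := by
  have hsub : t.gEq ⊆ A.R := (A.wf t ht).2.2.1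
  exact ⟨fun h ⟨r, hr⟩ => ⟨r, hsub hr, h r hr⟩,
    fun h r hr => (h ⟨r, hr⟩).eq_some hreg (hsub hr)⟩

theorem stored_apply_iff (hreg : A.R.card ≤ 1) (ht : t ∈ A.Δ)
    (hguard : t.gEq.Nonempty → A.Stored f d) :
    A.Stored (t.apply f d) v ↔ A.StoresInput t ∧ v = d ∨ A.Preserves t ∧ A.Stored f v := by
  have hcopy : ∀ r ∈ A.R, ∀ r', t.upd r = .reg r' → r' ∈ A.R := (A.wf t ht).2.2.2.2.2
  constructor
  · rintro ⟨r, hr, hv⟩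
    cases hu : t.upd r with
    | input =>
      have hdv : d = v := by simpa [NRATrans.apply, hu] using hv
      exact .inl ⟨⟨r, hr, .inl hu⟩, hdv.symm⟩
    | clear => simp [NRATrans.apply, hu] at hv
    | reg r' =>
      have hstored : A.Stored f v := ⟨r', hcopy r hr r' hu, by simpa [NRATrans.apply, hu] using hv⟩
      rcases t.gEq.eq_empty_or_nonempty with hempty | hne
      · exact .inr ⟨⟨hempty, r, hr, r', hu⟩, hstored⟩
      · exact .inl ⟨⟨r, hr, .inr ⟨hne, r', hu⟩⟩, hstored.unique hreg (hguard hne)⟩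
  · rintro (⟨⟨r, hr, hu | ⟨hne, r', hu⟩⟩, rfl⟩ | ⟨⟨-, r, hr, r', hu⟩, hstored⟩)
    · exact ⟨r, hr, by simp [NRATrans.apply, hu]⟩
    · have hr' : f r' = some v := (hguard hne).eq_some hreg (hcopy r hr r' hu)
      exact ⟨r, hr, by simpa [NRATrans.apply, hu] using hr'⟩
    · have hr' : f r' = some v := hstored.eq_some hreg (hcopy r hr r' hu)
      exact ⟨r, hr, by simpa [NRATrans.apply, hu] using hr'⟩

theorem mem_post_iff (hreg : A.R.card ≤ 1) (hneq : ∀ t ∈ A.Δ, t.gNeq = ∅) {C : Set Config}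
    {x : Sigma × ℕ} {c' : Config} :
    c' ∈ A.post C x ↔ ∃ t ∈ A.Δ, t.letter = x.1 ∧ ∃ f, (t.src, f) ∈ C ∧
      (t.gEq.Nonempty → A.Stored f x.2) ∧ c' = (t.tgt, t.apply f x.2) := by
  constructor
  · rintro ⟨⟨_, f⟩, hc, t, ht, rfl, hletter, heq, -, hc'⟩
    exact ⟨t, ht, hletter, f, hc, (eqGuard_iff hreg ht).1 heq, hc'⟩
  · rintro ⟨t, ht, hletter, f, hc, hguard, hc'⟩
    exact ⟨_, hc, t, ht, rfl, hletter, (eqGuard_iff hreg ht).2 hguard, by simp [hneq t ht], hc'⟩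

end OneRegister

section Determinization

/-- The transitions of `A` reading `a` that can fire from some configuration of a set in which
exactly the states of `P` occur, and the current input is stored exactly for the states of `G`. -/
noncomputable def enabled (A : NRA Sigma) (P : Finset ℕ) (a : Sigma) (G : Finset ℕ) :
    Finset (NRATrans Sigma) :=
  open scoped Classical in
  {t ∈ A.finite_trans.toFinset | t.letter = a ∧ t.src ∈ P ∧ (t.gEq.Nonempty → t.src ∈ G)}

/-- The update term contributed by `t` to the set register of its target state: the current input,
the set register of its source state, or nothing. -/
noncomputable def contribution (A : NRA Sigma) (t : NRATrans Sigma) : Finset (Option ℕ) :=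
  open scoped Classical in
  (if A.StoresInput t then {none} else ∅) ∪ (if A.Preserves t then {some t.src} else ∅)

/-- The transition of the determinization from `P` on the letter `a` for an input that is contained
in exactly those set registers whose index lies in `G`. -/
noncomputable def macroTrans (A : NRA Sigma) (P : Finset ℕ) (a : Sigma) (G : Finset ℕ) :
    RsATrans Sigma where
  src := Encodable.encode P
  letter := a
  gIn := G
  gNin := A.Q \ G
  upd s := {t ∈ A.enabled P a G | t.tgt = s}.biUnion A.contribution
  tgt := Encodable.encode ((A.enabled P a G).image NRATrans.tgt)

/-- The transitions of the determinization. Only letters occurring in a transition of `A` are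
used, so that there are finitely many of them over any alphabet. -/
def macroTransitions (A : NRA Sigma) : Set (RsATrans Sigma) :=
  {τ | ∃ P ⊆ A.Q, ∃ t ∈ A.Δ, ∃ G ⊆ A.Q, A.macroTrans P t.letter G = τ}

variable {A : NRA Sigma} {P G : Finset ℕ} {a : Sigma} {t : NRATrans Sigma} {q s : ℕ}

theorem mem_enabled :
    t ∈ A.enabled P a G ↔
      t ∈ A.Δ ∧ t.letter = a ∧ t.src ∈ P ∧ (t.gEq.Nonempty → t.src ∈ G) := by
  simp [enabled]

theorem image_tgt_enabled_subset : (A.enabled P a G).image NRATrans.tgt ⊆ A.Q :=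
  Finset.image_subset_iff.2 fun t ht => (A.wf t (mem_enabled.1 ht).1).2.1

theorem none_mem_contribution : none ∈ A.contribution t ↔ A.StoresInput t := by
  unfold contribution
  split_ifs <;> simp_all

theorem some_mem_contribution : some q ∈ A.contribution t ↔ A.Preserves t ∧ t.src = q := by
  unfold contribution
  split_ifs <;> simp_all [eq_comm]

theorem none_mem_macroTrans_upd :
    none ∈ (A.macroTrans P a G).upd s ↔ ∃ t ∈ A.enabled P a G, t.tgt = s ∧ A.StoresInput t := by
  simp [macroTrans, none_mem_contribution, and_assoc]

theorem some_mem_macroTrans_upd :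
    some q ∈ (A.macroTrans P a G).upd s ↔
      ∃ t ∈ A.enabled P a G, t.tgt = s ∧ A.Preserves t ∧ t.src = q := by
  simp [macroTrans, some_mem_contribution, and_assoc]

theorem finite_macroTransitions (A : NRA Sigma) : A.macroTransitions.Finite := by
  have hQ : {P | P ⊆ A.Q}.Finite := Set.finite_Iic A.Q
  refine ((hQ.prod (A.finite_trans.prod hQ)).image
    fun p => A.macroTrans p.1 p.2.1.letter p.2.2).subset ?_
  rintro _ ⟨P, hP, t, ht, G, hG, rfl⟩
  exact ⟨(P, t, G), ⟨hP, ht, hG⟩, rfl⟩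

/-- The subset construction: the states are the codes of sets of states of `A`, and the set
register `q` collects the values that may be stored when `A` is in the state `q`. -/
noncomputable def determinization (A : NRA Sigma) : RsA Sigma where
  Q := A.Q.powerset.image Encodable.encode
  R := A.Q
  Δ := A.macroTransitions
  I := {Encodable.encode A.I}
  F := {P ∈ A.Q.powerset | (P ∩ A.F).Nonempty}.image Encodable.encode
  finite_trans := A.finite_macroTransitions
  I_sub := Finset.singleton_subset_iff.2
    (Finset.mem_image_of_mem _ (Finset.mem_powerset.2 A.I_sub))
  F_sub := Finset.image_subset_image (Finset.filter_subset _ _)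
  wf := by
    rintro _ ⟨P, hP, _, -, G, hG, rfl⟩
    refine ⟨Finset.mem_image_of_mem _ (Finset.mem_powerset.2 hP),
      Finset.mem_image_of_mem _ (Finset.mem_powerset.2 image_tgt_enabled_subset),
      hG, Finset.sdiff_subset, Finset.disjoint_sdiff, fun _ _ q hq => ?_⟩
    obtain ⟨t, ht, -, -, rfl⟩ := some_mem_macroTrans_upd.1 hq
    exact (A.wf t (mem_enabled.1 ht).1).1

theorem encode_mem_determinization_F (hP : P ⊆ A.Q) :
    Encodable.encode P ∈ A.determinization.F ↔ ∃ q ∈ P, q ∈ A.F := by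
  simp [determinization, Finset.Nonempty, hP]

theorem determinization_deterministic (A : NRA Sigma) : A.determinization.Deterministic := by
  rintro _ ⟨P, -, t, -, G, hG, rfl⟩ _ ⟨P', -, t', -, G', hG', rfl⟩ hne hsrc hletter
  obtain rfl : P = P' := Encodable.encode_injective hsrc
  replace hletter : t.letter = t'.letter := hletter
  have hGG' : G ≠ G' := by
    rintro rfl
    exact hne (by rw [hletter])
  change (G ∩ (A.Q \ G')).Nonempty ∨ (G' ∩ (A.Q \ G)).Nonempty
  contrapose! hGG'
  simp only [← Finset.inter_sdiff_assoc, Finset.inter_eq_left.2 hG, Finset.inter_eq_left.2 hG',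
    Finset.sdiff_eq_empty_iff_subset] at hGG'
  exact hGG'.1.antisymm hGG'.2

end Determinization

section Correctness

/-- The set `P` of states and the assignment `g` of sets of values to states summarise the set `C`
of configurations. -/
structure Summarizes (A : NRA Sigma) (P : Finset ℕ) (g : ℕ → Finset ℕ) (C : Set Config) :
    Prop where
  subset : P ⊆ A.Q
  mem_states : ∀ q, q ∈ P ↔ ∃ f, (q, f) ∈ C
  mem_values : ∀ q v, v ∈ g q ↔ ∃ f, (q, f) ∈ C ∧ A.Stored f v

/-- The relation between sets of configurations of `A` and configurations of its determinization
that is maintained along runs. -/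
def Encodes (A : NRA Sigma) (C : Set Config) (k : ℕ × (ℕ → Finset ℕ)) : Prop :=
  ∃ P : Finset ℕ, k.1 = Encodable.encode P ∧ A.Summarizes P k.2 C

variable {A : NRA Sigma} {P G : Finset ℕ} {g : ℕ → Finset ℕ} {C : Set Config} {x : Sigma × ℕ}
  {k k' : ℕ × (ℕ → Finset ℕ)}

theorem summarizes_initial (A : NRA Sigma) : A.Summarizes A.I (fun _ => ∅) A.initial where
  subset := A.I_sub
  mem_states := by simp [initial]
  mem_values := by simp [initial, Stored]

theorem Summarizes.mem_enabled_iff (h : A.Summarizes P g C) (hG : ∀ q ∈ A.Q, q ∈ G ↔ x.2 ∈ g q)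
    {t : NRATrans Sigma} :
    t ∈ A.enabled P x.1 G ↔ t ∈ A.Δ ∧ t.letter = x.1 ∧
      ∃ f, (t.src, f) ∈ C ∧ (t.gEq.Nonempty → A.Stored f x.2) := by
  refine mem_enabled.trans (and_congr_right fun ht => and_congr_right fun _ => ?_)
  rw [hG t.src (A.wf t ht).1, h.mem_states, h.mem_values]
  constructor
  · rintro ⟨⟨f, hf⟩, hguard⟩
    by_cases hne : t.gEq.Nonempty
    · obtain ⟨f', hf', hstored⟩ := hguard hne
      exact ⟨f', hf', fun _ => hstored⟩
    · exact ⟨f, hf, fun hne' => absurd hne' hne⟩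
  · rintro ⟨f, hf, hguard⟩
    exact ⟨⟨f, hf⟩, fun hne => ⟨f, hf, hguard hne⟩⟩

theorem Summarizes.mem_macroTrans_apply_iff (h : A.Summarizes P g C)
    (hG : ∀ q ∈ A.Q, q ∈ G ↔ x.2 ∈ g q) (hreg : A.R.card ≤ 1) (hneq : ∀ t ∈ A.Δ, t.gNeq = ∅)
    {s v : ℕ} :
    v ∈ (A.macroTrans P x.1 G).apply g x.2 s ↔ ∃ f, (s, f) ∈ A.post C x ∧ A.Stored f v := by
  simp only [RsATrans.mem_apply_s14, none_mem_macroTrans_upd, some_mem_macroTrans_upd,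
    mem_post_iff hreg hneq]
  constructor
  · rintro (⟨⟨t, ht, rfl, hinput⟩, rfl⟩ | ⟨_, ⟨t, ht, rfl, hpres, rfl⟩, hv⟩)
    · obtain ⟨hΔ, hletter, f, hf, hguard⟩ := (h.mem_enabled_iff hG).1 ht
      exact ⟨_, ⟨t, hΔ, hletter, f, hf, hguard, rfl⟩,
        (stored_apply_iff hreg hΔ hguard).2 (.inl ⟨hinput, rfl⟩)⟩
    · obtain ⟨hΔ, hletter, -⟩ := mem_enabled.1 ht
      obtain ⟨f, hf, hstored⟩ := (h.mem_values t.src v).1 hv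
      have hguard : t.gEq.Nonempty → A.Stored f x.2 := fun hne => absurd hpres.1 hne.ne_empty
      exact ⟨_, ⟨t, hΔ, hletter, f, hf, hguard, rfl⟩,
        (stored_apply_iff hreg hΔ hguard).2 (.inr ⟨hpres, hstored⟩)⟩
  · rintro ⟨_, ⟨t, hΔ, hletter, f, hf, hguard, hc'⟩, hstored⟩
    obtain ⟨rfl, rfl⟩ := Prod.mk.inj hc'
    have ht : t ∈ A.enabled P x.1 G := (h.mem_enabled_iff hG).2 ⟨hΔ, hletter, f, hf, hguard⟩
    rcases (stored_apply_iff hreg hΔ hguard).1 hstored with ⟨hinput, hv⟩ | ⟨hpres, hv⟩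
    · exact .inl ⟨⟨t, ht, rfl, hinput⟩, hv⟩
    · exact .inr ⟨t.src, ⟨t, ht, rfl, hpres, rfl⟩, (h.mem_values t.src v).2 ⟨f, hf, hv⟩⟩

theorem Summarizes.post (h : A.Summarizes P g C) (hG : ∀ q ∈ A.Q, q ∈ G ↔ x.2 ∈ g q)
    (hreg : A.R.card ≤ 1) (hneq : ∀ t ∈ A.Δ, t.gNeq = ∅) :
    A.Summarizes ((A.enabled P x.1 G).image NRATrans.tgt)
      ((A.macroTrans P x.1 G).apply g x.2) (A.post C x) where
  subset := image_tgt_enabled_subset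
  mem_states s := by
    simp only [Finset.mem_image, h.mem_enabled_iff hG, mem_post_iff hreg hneq, Prod.mk.injEq]
    constructor
    · rintro ⟨t, ⟨hΔ, hletter, f, hf, hguard⟩, rfl⟩
      exact ⟨_, t, hΔ, hletter, f, hf, hguard, rfl, rfl⟩
    · rintro ⟨_, t, hΔ, hletter, f, hf, hguard, rfl, -⟩
      exact ⟨t, ⟨hΔ, hletter, f, hf, hguard⟩, rfl⟩
  mem_values _ _ := h.mem_macroTrans_apply_iff hG hreg hneq

theorem Encodes.mem_determinization_F_iff (h : A.Encodes C k) :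
    k.1 ∈ A.determinization.F ↔ ∃ c ∈ C, c.1 ∈ A.F := by
  obtain ⟨P, hk, hP⟩ := h
  simp only [hk, encode_mem_determinization_F hP.subset, hP.mem_states, Prod.exists]
  tauto

theorem Encodes.post (h : A.Encodes C k) (hreg : A.R.card ≤ 1) (hneq : ∀ t ∈ A.Δ, t.gNeq = ∅)
    (hstep : A.determinization.Step k x k') : A.Encodes (A.post C x) k' := by
  obtain ⟨P, hk, hP⟩ := h
  obtain ⟨_, ⟨P', -, t, -, G, -, rfl⟩, hsrc, hletter, hin, hnin, rfl⟩ := hstep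
  obtain rfl : P' = P := Encodable.encode_injective (hsrc.trans hk)
  replace hletter : t.letter = x.1 := hletter
  rw [hletter] at hin hnin ⊢
  have hG : ∀ q ∈ A.Q, q ∈ G ↔ x.2 ∈ k.2 q := fun q hq =>
    ⟨hin q, fun hx => by_contra fun hqG => hnin q (Finset.mem_sdiff.2 ⟨hq, hqG⟩) hx⟩
  exact ⟨_, rfl, hP.post hG hreg hneq⟩

theorem Encodes.exists_step (h : A.Encodes C k) (hpost : (A.post C x).Nonempty) :
    ∃ k', A.determinization.Step k x k' := by
  obtain ⟨P, hk, hP⟩ := h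
  obtain ⟨_, _, _, t, ht, _, hletter, -⟩ := hpost
  refine ⟨_, _, ⟨P, hP.subset, t, ht, {q ∈ A.Q | x.2 ∈ k.2 q}, Finset.filter_subset _ _, rfl⟩,
    hk.symm, hletter, fun q hq => (Finset.mem_filter.1 hq).2, fun q hq hx => ?_, rfl⟩
  obtain ⟨hqQ, hqG⟩ := Finset.mem_sdiff.1 hq
  exact hqG (Finset.mem_filter.2 ⟨hqQ, hx⟩)

theorem isSubsetSimulation_determinization (A : NRA Sigma) (hreg : A.R.card ≤ 1)
    (hneq : ∀ t ∈ A.Δ, t.gNeq = ∅) : A.IsSubsetSimulation A.determinization A.Encodes where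
  nonempty_init := Finset.singleton_nonempty _
  init _ hq₀ := ⟨A.I, Finset.mem_singleton.1 hq₀, A.summarizes_initial⟩
  final h := h.mem_determinization_F_iff
  step h hstep := h.post hreg hneq hstep
  exists_step h hpost := h.exists_step hpost

end Correctness

end NRA

theorem nra_eq_one_to_drsa_general {Sigma : Type} (A : NRA Sigma) (hreg : A.R.card ≤ 1)
    (hneq : ∀ t ∈ A.Δ, t.gNeq = ∅) :
    ∃ D : RsA Sigma, D.Deterministic ∧ RsA.Lang D = NRA.Lang A :=
  ⟨A.determinization, A.determinization_deterministic,
    (A.isSubsetSimulation_determinization hreg hneq).lang_eq⟩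

/-- Every NRA with at most one register and no disequality guards
can be converted to a deterministic RsA with the same language. -/
theorem nra_eq_one_to_drsa (Sigma : Type) [Fintype Sigma] [Nonempty Sigma]
    (A : NRA Sigma) (hreg : A.R.card ≤ 1) (hneq : ∀ t ∈ A.Δ, t.gNeq = ∅) :
    ∃ D : RsA Sigma, D.Deterministic ∧ RsA.Lang D = NRA.Lang A :=
  nra_eq_one_to_drsa_general A hreg hneq
end

section
/- For every universal register automaton with at most one register and no disequality guards (every transition has g≠ = ∅), there exists a deterministic register set automaton recognizing the same language. -/
/-!
Whether a universal automaton accepts a word is determined by the sets of configurations reachable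
on its prefixes, so it is enough to track the set of reachable configurations. With a single
register this set amounts, for each state `q`, to the set `r_q` of data stored at `q` (a register
of the deterministic automaton), together with the information whether `q` is reachable with an
empty register.

Equality tests only distinguish the current datum `d` from all others. Hence which rules apply is
determined by, for each `q`, whether `d ∈ r_q` and whether `r_q` contains a datum other than `d`.
The first is a guard of the set automaton. The second holds iff `r_q ≠ ∅` and either `d ∉ r_q` or
`r_q` has two distinct elements, so finite control must know which `r_q` are nonempty and which
have two elements. A register is updated to a union of old ones, so the latter can be maintained
once it is known, for all `p` and `q`, whether there are distinct data `x ∈ r_p` and `y ∈ r_q`.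
-/

section UnivAccepts

variable {X Y L : Type*}

/-- Universal acceptance of a word from a configuration of a labelled transition system: no run
on the word gets stuck, and every run reading all of it ends in `final`. -/
def UnivAccepts (step : X → L → X → Prop) (final : Set X) : X → List L → Prop
  | c, [] => c ∈ final
  | c, x :: w => (∃ c', step c x c') ∧ ∀ c', step c x c' → UnivAccepts step final c' w

/-- The one-step successors, under a given letter, of a set of configurations: the transition
function of the subset construction. -/
def successors (step : X → L → X → Prop) (C : Set X) (x : L) : Set X :=
  {c' | ∃ c ∈ C, step c x c'}

theorem forall_univAccepts_cons {step : X → L → X → Prop} {final : Set X} {C : Set X} {x : L}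
    {w : List L} :
    (∀ c ∈ C, UnivAccepts step final c (x :: w)) ↔
      (∀ c ∈ C, ∃ c', step c x c') ∧ ∀ c' ∈ successors step C x, UnivAccepts step final c' w := by
  simp only [UnivAccepts, successors, Set.mem_ofPred_eq]
  constructor
  · intro h
    exact ⟨fun c hc => (h c hc).1, fun c' ⟨c, hc, hs⟩ => (h c hc).2 c' hs⟩
  · rintro ⟨hlive, hsucc⟩ c hc
    exact ⟨hlive c hc, fun c' hs => hsucc c' ⟨c, hc, hs⟩⟩

theorem univAccepts_iff_of_bisimulation {step : X → L → X → Prop} {final : Set X}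
    {step' : Y → L → Y → Prop} {final' : Set Y} {r : X → Y → Prop}
    (hfinal : ∀ {c b}, r c b → (c ∈ final ↔ b ∈ final'))
    (forth : ∀ {c b x c'}, r c b → step c x c' → ∃ b', step' b x b' ∧ r c' b')
    (back : ∀ {c b x b'}, r c b → step' b x b' → ∃ c', step c x c' ∧ r c' b')
    {c : X} {b : Y} (h : r c b) (w : List L) :
    UnivAccepts step final c w ↔ UnivAccepts step' final' b w := by
  induction w generalizing c b with
  | nil => exact hfinal h
  | cons x w ih =>
    constructor
    · rintro ⟨⟨c', hc'⟩, hall⟩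
      refine ⟨(forth h hc').imp fun _ => And.left, fun b' hb' => ?_⟩
      obtain ⟨c', hc', h'⟩ := back h hb'
      exact (ih h').1 (hall c' hc')
    · rintro ⟨⟨b', hb'⟩, hall⟩
      refine ⟨(back h hb').imp fun _ => And.left, fun c' hc' => ?_⟩
      obtain ⟨b', hb', h'⟩ := forth h hc'
      exact (ih h').2 (hall b' hb')

end UnivAccepts

/-- A deterministic register set automaton over arbitrary state and register types. A transition
is selected by the exact set `G` of registers containing the current datum, and is absent when
`safe` fails. As in `RsATrans`, `none` in an update stands for the current datum. -/
structure SetMachine (Sigma S R : Type) where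
  init : S
  final : Set S
  safe : S → Sigma → Set R → Prop
  next : S → Sigma → Set R → S
  upd : S → Sigma → Set R → R → Set (Option R)

namespace SetMachine

variable {Sigma S R : Type} (M : SetMachine Sigma S R)

/-- The register contents after a transition of a set machine. -/
def update (s : S) (x : Sigma × ℕ) (f : R → Set ℕ) (r : R) : Set ℕ :=
  {e | ∃ o ∈ M.upd s x.1 {r | x.2 ∈ f r} r, o.elim (e = x.2) fun r' => e ∈ f r'}

/-- Acceptance of a word by a set machine from a given state and register contents. -/
def Accepts : S → (R → Set ℕ) → DataWord Sigma → Prop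
  | s, _, [] => s ∈ M.final
  | s, f, x :: w => M.safe s x.1 {r | x.2 ∈ f r} ∧
      Accepts (M.next s x.1 {r | x.2 ∈ f r}) (M.update s x f) w

variable [Finite R] (eS : S ↪ ℕ) (eR : R ↪ ℕ)

/-- The transition of the register set automaton encoding a set machine, for states and registers
numbered by `eS` and `eR`. -/
noncomputable def toRsATrans (s : S) (a : Sigma) (G : Set R) : RsATrans Sigma where
  src := eS s
  letter := a
  gIn := (Set.toFinite (eR '' G)).toFinset
  gNin := (Set.toFinite (eR '' Gᶜ)).toFinset
  upd n := (Set.toFinite (Option.map eR '' {o | ∃ r, eR r = n ∧ o ∈ M.upd s a G r})).toFinset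
  tgt := eS (M.next s a G)

variable {M eS eR}

theorem guards_toRsATrans_iff {s : S} {a : Sigma} {G : Set R} {f : ℕ → Finset ℕ} {d : ℕ} :
    (∀ r ∈ (M.toRsATrans eS eR s a G).gIn, d ∈ f r) ∧
      (∀ r ∈ (M.toRsATrans eS eR s a G).gNin, d ∉ f r) ↔ G = {r | d ∈ f (eR r)} := by
  simp only [toRsATrans, Set.Finite.mem_toFinset, Set.forall_mem_image, Set.mem_compl_iff,
    Set.ext_iff, Set.mem_ofPred_eq, ← forall_and]
  exact forall_congr' fun r => by tauto

theorem apply_toRsATrans {s : S} {x : Sigma × ℕ} {f : ℕ → Finset ℕ} :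
    (fun r => ((M.toRsATrans eS eR s x.1 {r | x.2 ∈ f (eR r)}).apply f x.2 (eR r) : Set ℕ)) =
      M.update s x fun r => (f (eR r) : Set ℕ) := by
  ext r e
  simp [RsATrans.apply, toRsATrans, update, Option.exists]

variable (M eS eR) [Finite S] [Finite Sigma]

/-- The register set automaton encoding a set machine, for states and registers numbered by `eS`
and `eR`. -/
noncomputable def toRsA : RsA Sigma where
  Q := (Set.finite_range eS).toFinset
  R := (Set.finite_range eR).toFinset
  Δ := {t | ∃ s a G, M.safe s a G ∧ t = M.toRsATrans eS eR s a G}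
  I := {eS M.init}
  F := (Set.toFinite (eS '' M.final)).toFinset
  finite_trans := by
    refine (Set.finite_range fun i : S × Sigma × Set R =>
      M.toRsATrans eS eR i.1 i.2.1 i.2.2).subset ?_
    rintro _ ⟨s, a, G, -, rfl⟩
    exact ⟨(s, a, G), rfl⟩
  I_sub := by simp
  F_sub := by simp
  wf := by
    rintro _ ⟨s, a, G, -, rfl⟩
    refine ⟨by simp [toRsATrans], by simp [toRsATrans], by simp [toRsATrans],
      by simp [toRsATrans], ?_, ?_⟩
    · simpa [toRsATrans, Set.disjoint_image_iff eR.injective] using disjoint_compl_right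
    · intro r _ r' h
      simp only [toRsATrans, Set.Finite.mem_toFinset] at h ⊢
      obtain ⟨o, -, h⟩ := h
      obtain ⟨p, -, rfl⟩ := Option.map_eq_some_iff.1 h
      exact Set.mem_range_self p

theorem deterministic_toRsA : (M.toRsA eS eR).Deterministic := by
  rintro _ ⟨s, a, G₁, -, rfl⟩ _ ⟨s', a', G₂, -, rfl⟩ hne hs (rfl : a = a')
  obtain rfl : s = s' := eS.injective hs
  have hG : G₁ ≠ G₂ := fun h => hne (by rw [h])
  obtain ⟨r, hr⟩ : ∃ r, ¬ (r ∈ G₁ ↔ r ∈ G₂) := by simpa [Set.ext_iff] using hG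
  obtain ⟨h₁, h₂⟩ | ⟨h₁, h₂⟩ : r ∈ G₁ ∧ r ∉ G₂ ∨ r ∉ G₁ ∧ r ∈ G₂ := by tauto
  · exact .inl ⟨eR r, by simp [toRsATrans, h₁, h₂]⟩
  · exact .inr ⟨eR r, by simp [toRsATrans, h₁, h₂]⟩

variable {M eS eR}

theorem step_toRsA_iff {s : S} {f : ℕ → Finset ℕ} {x : Sigma × ℕ} {c' : ℕ × (ℕ → Finset ℕ)} :
    (M.toRsA eS eR).Step (eS s, f) x c' ↔ M.safe s x.1 {r | x.2 ∈ f (eR r)} ∧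
      c' = (eS (M.next s x.1 {r | x.2 ∈ f (eR r)}),
        (M.toRsATrans eS eR s x.1 {r | x.2 ∈ f (eR r)}).apply f x.2) := by
  constructor
  · rintro ⟨_, ⟨s', a, G, hsafe, rfl⟩, hs, rfl, hin, hnin, rfl⟩
    obtain rfl : s' = s := eS.injective hs
    obtain rfl := guards_toRsATrans_iff.1 ⟨hin, hnin⟩
    exact ⟨hsafe, rfl⟩
  · rintro ⟨hsafe, rfl⟩
    obtain ⟨hin, hnin⟩ := guards_toRsATrans_iff (M := M) (eS := eS) (s := s) (a := x.1).2 rfl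
    exact ⟨_, ⟨s, x.1, _, hsafe, rfl⟩, rfl, rfl, hin, hnin, rfl⟩

theorem exists_accepting_run_toRsA_iff (w : DataWord Sigma) (s : S) (f : ℕ → Finset ℕ) :
    (∃ c, (M.toRsA eS eR).Run (eS s, f) w c ∧ c.1 ∈ (M.toRsA eS eR).F) ↔
      M.Accepts s (fun r => f (eR r)) w := by
  induction w generalizing s f with
  | nil =>
    have hF : eS s ∈ (M.toRsA eS eR).F ↔ s ∈ M.final := by simp [toRsA]
    exact ⟨fun ⟨_, .nil _, h⟩ => hF.1 h, fun h => ⟨_, .nil _, hF.2 h⟩⟩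
  | cons x w ih =>
    have hsucc := ih (M.next s x.1 {r | x.2 ∈ f (eR r)})
      ((M.toRsATrans eS eR s x.1 {r | x.2 ∈ f (eR r)}).apply f x.2)
    rw [apply_toRsATrans] at hsucc
    constructor
    · rintro ⟨c, hrun, hc⟩
      obtain _ | ⟨hstep, hrun⟩ := hrun
      obtain ⟨hsafe, rfl⟩ := step_toRsA_iff.1 hstep
      exact ⟨hsafe, hsucc.1 ⟨c, hrun, hc⟩⟩
    · rintro ⟨hsafe, haccepts⟩
      obtain ⟨c, hrun, hc⟩ := hsucc.2 haccepts
      exact ⟨c, .cons (step_toRsA_iff.2 ⟨hsafe, rfl⟩) hrun, hc⟩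

theorem exists_deterministic_rsa (M : SetMachine Sigma S R) :
    ∃ D : RsA Sigma, D.Deterministic ∧ D.Lang = {w | M.Accepts M.init (fun _ => ∅) w} := by
  obtain ⟨eS⟩ := nonempty_embedding_nat S
  obtain ⟨eR⟩ := nonempty_embedding_nat R
  refine ⟨M.toRsA eS eR, M.deterministic_toRsA eS eR, Set.ext fun w => ?_⟩
  have h := exists_accepting_run_toRsA_iff (M := M) (eS := eS) (eR := eR) w M.init fun _ => ∅
  simp only [Finset.coe_empty] at h
  simp only [Set.mem_ofPred_eq, ← h, RsA.Lang]
  simp [toRsA]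

end SetMachine

/-- What a rule does to the single register of an `EqAutomaton`. -/
inductive RegAction : Type where
  | keep
  | store
  | clear

/-- The content of the register after an action, on reading the datum `d`. -/
def RegAction.run {α : Type*} : RegAction → Option α → α → Option α
  | keep, v, _ => v
  | store, _, d => some d
  | clear, _, _ => none

/-- A rule of an `EqAutomaton`; if `test` holds, the rule requires the register to contain the
current datum. -/
structure EqRule (Sigma P : Type) where
  src : P
  letter : Sigma
  test : Prop
  act : RegAction
  tgt : P

/-- A one-register automaton without disequality tests. It runs over every data domain, so that
its behaviour over `ℕ` can be compared with that over `Bool`. -/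
structure EqAutomaton (Sigma P : Type) where
  rules : Set (EqRule Sigma P)
  init : Set P
  final : Set P

namespace EqAutomaton

variable {Sigma P : Type} {α β : Type*}

section ConfigurationSets

/-- The map on one-register configurations induced by a map of data. -/
def mapData (f : α → β) : P × Option α → P × Option β :=
  Prod.map id (Option.map f)

/-- What a set of configurations looks like when data can only be compared with `d`. -/
def view (d : ℕ) (C : Set (P × Option ℕ)) : Set (P × Option Bool) :=
  mapData (· == d) '' C

/-- The pairs of states at which two distinct data are stored. -/
def apart (C : Set (P × Option α)) : Set (P × P) :=
  {pq | ∃ x y, x ≠ y ∧ (pq.1, some x) ∈ C ∧ (pq.2, some y) ∈ C}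

/-- The finite information about a set of configurations kept in the finite control: the occupied
states, with or without a stored datum, and the pairs of states storing distinct data. -/
structure Shape (P : Type) where
  occupied : Set (P × Option Unit)
  apart : Set (P × P)

instance [Finite P] : Finite (Shape P) :=
  Finite.of_injective (fun σ : Shape P => (σ.occupied, σ.apart)) fun
    | ⟨_, _⟩, ⟨_, _⟩, h => by simpa using h

/-- The shape of a set of configurations. -/
def shape (C : Set (P × Option α)) : Shape P where
  occupied := mapData (fun _ => ()) '' C
  apart := apart C

/-- The view of a set of configurations of shape `σ` in which exactly the states in `G` store the
current datum. -/
def Shape.view (σ : Shape P) (G : Set P) : Set (P × Option Bool) :=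
  {c | match c with
    | (q, none) => (q, none) ∈ σ.occupied
    | (q, some true) => q ∈ G
    | (q, some false) => (q, some ()) ∈ σ.occupied ∧ (q ∉ G ∨ (q, q) ∈ σ.apart)}

theorem none_mem_image_mapData {f : α → β} {C : Set (P × Option α)} {q : P} :
    (q, none) ∈ mapData f '' C ↔ (q, none) ∈ C := by
  simp [mapData]

theorem some_mem_image_mapData {f : α → β} {C : Set (P × Option α)} {q : P} {y : β} :
    (q, some y) ∈ mapData f '' C ↔ ∃ x, (q, some x) ∈ C ∧ f x = y := by
  simp [mapData, Option.exists]

theorem some_true_mem_view {d : ℕ} {C : Set (P × Option ℕ)} {q : P} :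
    (q, some true) ∈ view d C ↔ (q, some d) ∈ C := by
  rw [view, some_mem_image_mapData]
  simp

theorem apart_image_mapData_subset (f : α → β) (C : Set (P × Option α)) :
    apart (mapData f '' C) ⊆ apart C := by
  rintro ⟨p, q⟩ ⟨_, _, hne, hp, hq⟩
  obtain ⟨x, hx, rfl⟩ := some_mem_image_mapData.1 hp
  obtain ⟨y, hy, rfl⟩ := some_mem_image_mapData.1 hq
  exact ⟨x, y, ne_of_apply_ne f hne, hx, hy⟩

theorem image_mapData_view (d : ℕ) (C : Set (P × Option ℕ)) :
    mapData (fun _ => ()) '' view d C = mapData (fun _ => ()) '' C := by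
  rw [view, Set.image_image]
  exact Set.image_congr fun ⟨_, v⟩ _ => by cases v <;> rfl

theorem exists_ne_iff {d : ℕ} {C : Set (P × Option ℕ)} {q : P} :
    (∃ x, (q, some x) ∈ C ∧ x ≠ d) ↔
      (∃ x, (q, some x) ∈ C) ∧ ((q, some d) ∉ C ∨ (q, q) ∈ apart C) := by
  constructor
  · rintro ⟨x, hx, hne⟩
    exact ⟨⟨x, hx⟩, or_iff_not_imp_left.2 fun hd => ⟨x, d, hne, hx, not_not.1 hd⟩⟩
  · rintro ⟨⟨x, hx⟩, hd | ⟨y, z, hyz, hy, hz⟩⟩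
    · exact ⟨x, hx, fun h => hd (h ▸ hx)⟩
    · by_cases h : y = d
      · exact ⟨z, hz, fun h' => hyz (h.trans h'.symm)⟩
      · exact ⟨y, hy, h⟩

theorem view_shape (d : ℕ) (C : Set (P × Option ℕ)) :
    (shape C).view {q | (q, some d) ∈ C} = view d C := by
  ext ⟨q, _ | _ | _⟩
  · exact none_mem_image_mapData.trans none_mem_image_mapData.symm
  · simp only [Shape.view, shape, view, Set.mem_ofPred_eq, some_mem_image_mapData, and_true,
      beq_eq_false_iff_ne]
    exact exists_ne_iff.symm
  · exact some_true_mem_view.symm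

end ConfigurationSets

variable (B : EqAutomaton Sigma P)

/-- One step of a one-register automaton over the data domain `α`. -/
def Step (c : P × Option α) (x : Sigma × α) (c' : P × Option α) : Prop :=
  ∃ t ∈ B.rules, t.src = c.1 ∧ t.letter = x.1 ∧ (t.test → c.2 = some x.2) ∧
    c' = (t.tgt, t.act.run c.2 x.2)

/-- The configurations reached in one step from a set of configurations. -/
abbrev post (C : Set (P × Option α)) (x : Sigma × α) : Set (P × Option α) :=
  successors B.Step C x

/-- No configuration of the set is stuck on the given letter. -/
def Live (C : Set (P × Option α)) (x : Sigma × α) : Prop :=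
  ∀ c ∈ C, ∃ c', B.Step c x c'

/-- The initial configurations: an initial state and the empty register. -/
def initials : Set (P × Option ℕ) :=
  {c | c.1 ∈ B.init ∧ c.2 = none}

/-- The universal language: the words accepted from all initial configurations. -/
def UnivLang : Set (DataWord Sigma) :=
  {w | ∀ c ∈ B.initials, UnivAccepts B.Step {c | c.1 ∈ B.final} c w}

/-- An untested rule on `a` leads from `p` to `q` and keeps the register. Only such rules carry
data other than the current one from `p` to `q`. -/
def Forwards (a : Sigma) (p q : P) : Prop :=
  ∃ t ∈ B.rules, t.src = p ∧ t.letter = a ∧ ¬ t.test ∧ t.act = .keep ∧ t.tgt = q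

variable {B}

theorem Forwards.step {a : Sigma} {p q : P} (h : B.Forwards a p q) (v : Option α) (d : α) :
    B.Step (p, v) (a, d) (q, v) := by
  obtain ⟨t, ht, rfl, rfl, htest, hact, rfl⟩ := h
  exact ⟨t, ht, rfl, rfl, fun h => absurd h htest, by simp [hact, RegAction.run]⟩

theorem Step.eq_or_forwards {a : Sigma} {d e : α} {c : P × Option α} {q : P}
    (h : B.Step c (a, d) (q, some e)) : e = d ∨ c.2 = some e ∧ B.Forwards a c.1 q := by
  obtain ⟨t, ht, hsrc, hletter, htest, hc'⟩ := h
  obtain ⟨rfl, hact⟩ := Prod.mk.inj hc'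
  cases hkind : t.act with
  | keep =>
    have hc : c.2 = some e := by simpa [hkind, RegAction.run] using hact.symm
    by_cases ht' : t.test
    · exact .inl (Option.some.inj (hc.symm.trans (htest ht')))
    · exact .inr ⟨hc, t, ht, hsrc, hletter, ht', hkind, rfl⟩
  | store => exact .inl (by simpa [hkind, RegAction.run] using hact)
  | clear => simp [hkind, RegAction.run] at hact

theorem some_mem_post_iff {C : Set (P × Option α)} {a : Sigma} {d e : α} {q : P} :
    (q, some e) ∈ B.post C (a, d) ↔
      (q, some d) ∈ B.post C (a, d) ∧ e = d ∨ ∃ p, B.Forwards a p q ∧ (p, some e) ∈ C := by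
  constructor
  · rintro ⟨c, hc, hstep⟩
    obtain rfl | ⟨hv, hfwd⟩ := hstep.eq_or_forwards
    · exact .inl ⟨⟨c, hc, hstep⟩, rfl⟩
    · exact .inr ⟨c.1, hfwd, by rwa [← hv]⟩
  · rintro (⟨h, rfl⟩ | ⟨p, hfwd, hp⟩)
    · exact h
    · exact ⟨_, hp, hfwd.step _ _⟩

/-- Data that look equal through the view at `d` but are distinct both differ from `d`, so they
were forwarded. -/
theorem apart_post (C : Set (P × Option ℕ)) (a : Sigma) (d : ℕ) :
    apart (B.post C (a, d)) =
      {pq | ∃ p q, (p, q) ∈ apart C ∧ B.Forwards a p pq.1 ∧ B.Forwards a q pq.2} ∪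
        apart (view d (B.post C (a, d))) := by
  refine Set.Subset.antisymm ?_ (Set.union_subset ?_ (apart_image_mapData_subset _ _))
  · rintro ⟨p, q⟩ ⟨x, y, hne, hx, hy⟩
    by_cases hview : (x == d) = (y == d)
    · obtain ⟨hxd, hyd⟩ : x ≠ d ∧ y ≠ d := by grind
      obtain ⟨p', hp, hp'⟩ := (some_mem_post_iff.1 hx).resolve_left fun h => hxd h.2
      obtain ⟨q', hq, hq'⟩ := (some_mem_post_iff.1 hy).resolve_left fun h => hyd h.2
      exact .inl ⟨p', q', ⟨x, y, hne, hp', hq'⟩, hp, hq⟩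
    · exact .inr ⟨_, _, hview, some_mem_image_mapData.2 ⟨x, hx, rfl⟩,
        some_mem_image_mapData.2 ⟨y, hy, rfl⟩⟩
  · rintro ⟨p, q⟩ ⟨p', q', ⟨x, y, hne, hp', hq'⟩, hp, hq⟩
    exact ⟨x, y, hne, ⟨_, hp', hp.step _ _⟩, ⟨_, hq', hq.step _ _⟩⟩

theorem step_mapData_iff {f : α → β} {d : α} (hf : ∀ e, f e = f d → e = d) {a : Sigma}
    {c : P × Option α} {b : P × Option β} :
    B.Step (mapData f c) (a, f d) b ↔ ∃ c', B.Step c (a, d) c' ∧ mapData f c' = b := by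
  have htest : Option.map f c.2 = some (f d) ↔ c.2 = some d := by
    rw [Option.map_eq_some_iff]
    exact ⟨fun ⟨e, he, h⟩ => hf e h ▸ he, fun h => ⟨d, h, rfl⟩⟩
  have hrun (t : RegAction) : t.run (Option.map f c.2) (f d) = Option.map f (t.run c.2 d) := by
    cases t <;> rfl
  simp only [Step, mapData, Prod.map_fst, Prod.map_snd, id_eq, htest, hrun]
  constructor
  · rintro ⟨t, ht, hsrc, hletter, heq, rfl⟩
    exact ⟨_, ⟨t, ht, hsrc, hletter, heq, rfl⟩, rfl⟩
  · rintro ⟨_, ⟨t, ht, hsrc, hletter, heq, rfl⟩, rfl⟩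
    exact ⟨t, ht, hsrc, hletter, heq, rfl⟩

theorem step_view_iff {a : Sigma} {d : ℕ} {c : P × Option ℕ} {b : P × Option Bool} :
    B.Step (mapData (· == d) c) (a, true) b ↔
      ∃ c', B.Step c (a, d) c' ∧ mapData (· == d) c' = b := by
  simpa using step_mapData_iff (B := B) (f := (· == d)) (d := d) (by simp)

theorem live_view_iff {C : Set (P × Option ℕ)} {a : Sigma} {d : ℕ} :
    B.Live (view d C) (a, true) ↔ B.Live C (a, d) := by
  simp only [Live, view, Set.forall_mem_image, step_view_iff]
  exact forall₂_congr fun c _ =>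
    ⟨fun ⟨_, c', h, _⟩ => ⟨c', h⟩, fun ⟨c', h⟩ => ⟨_, c', h, rfl⟩⟩

theorem post_view (C : Set (P × Option ℕ)) (a : Sigma) (d : ℕ) :
    B.post (view d C) (a, true) = view d (B.post C (a, d)) := by
  ext b
  constructor
  · rintro ⟨_, ⟨c, hc, rfl⟩, hstep⟩
    obtain ⟨c', hc', rfl⟩ := step_view_iff.1 hstep
    exact ⟨c', ⟨c, hc, hc'⟩, rfl⟩
  · rintro ⟨c', ⟨c, hc, hstep⟩, rfl⟩
    exact ⟨_, ⟨c, hc, rfl⟩, step_view_iff.2 ⟨c', hstep, rfl⟩⟩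

variable (B)

/-- The determinization of a universal one-register automaton. Its control is the shape of the set
of reachable configurations, and register `q` holds the data stored at state `q`. -/
def toSetMachine : SetMachine Sigma (Shape P) P where
  init := shape B.initials
  final := {σ | ∀ c ∈ σ.occupied, c.1 ∈ B.final}
  safe σ a G := B.Live (σ.view G) (a, true)
  next σ a G :=
    { occupied := mapData (fun _ => ()) '' B.post (σ.view G) (a, true)
      apart := {pq | ∃ p q, (p, q) ∈ σ.apart ∧ B.Forwards a p pq.1 ∧ B.Forwards a q pq.2} ∪
        apart (B.post (σ.view G) (a, true)) }
  upd σ a G q := {o | o.elim ((q, some true) ∈ B.post (σ.view G) (a, true))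
    fun p => B.Forwards a p q}

variable {B}

theorem post_view_shape (C : Set (P × Option ℕ)) (a : Sigma) (d : ℕ) :
    B.post ((shape C).view {q | (q, some d) ∈ C}) (a, true) = view d (B.post C (a, d)) := by
  rw [view_shape, post_view]

theorem next_shape (C : Set (P × Option ℕ)) (a : Sigma) (d : ℕ) :
    B.toSetMachine.next (shape C) a {q | (q, some d) ∈ C} = shape (B.post C (a, d)) := by
  simp only [toSetMachine, post_view_shape, image_mapData_view]
  rw [shape.eq_def (B.post C (a, d)), apart_post]
  rfl

theorem update_shape (C : Set (P × Option ℕ)) (x : Sigma × ℕ) :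
    B.toSetMachine.update (shape C) x (fun q => {e | (q, some e) ∈ C}) =
      fun q => {e | (q, some e) ∈ B.post C x} := by
  ext q e
  simp only [SetMachine.update, toSetMachine, Set.mem_ofPred_eq, post_view_shape,
    some_true_mem_view, Option.exists, Option.elim_none, Option.elim_some]
  exact some_mem_post_iff.symm

theorem toSetMachine_accepts_iff (w : DataWord Sigma) (C : Set (P × Option ℕ)) :
    B.toSetMachine.Accepts (shape C) (fun q => {e | (q, some e) ∈ C}) w ↔
      ∀ c ∈ C, UnivAccepts B.Step {c | c.1 ∈ B.final} c w := by
  induction w generalizing C with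
  | nil => simp only [SetMachine.Accepts, toSetMachine, shape, Set.mem_ofPred_eq,
      Set.forall_mem_image, mapData, Prod.map_fst, id_eq, UnivAccepts]
  | cons x w ih =>
    have hsafe : B.toSetMachine.safe (shape C) x.1 {q | (q, some x.2) ∈ C} ↔ B.Live C x := by
      simp only [toSetMachine, view_shape, live_view_iff]
    rw [forall_univAccepts_cons, ← ih]
    simp only [SetMachine.Accepts, Set.mem_ofPred_eq, hsafe, next_shape, update_shape, Live]

theorem exists_deterministic_rsa [Finite Sigma] [Finite P] (B : EqAutomaton Sigma P) :
    ∃ D : RsA Sigma, D.Deterministic ∧ D.Lang = B.UnivLang := by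
  obtain ⟨D, hdet, hlang⟩ := B.toSetMachine.exists_deterministic_rsa
  refine ⟨D, hdet, hlang.trans (Set.ext fun w => ?_)⟩
  have hempty : (fun q => {e | (q, some e) ∈ B.initials}) = fun _ => ∅ := by
    ext q e
    simp [initials]
  exact hempty ▸ toSetMachine_accepts_iff w B.initials

end EqAutomaton

namespace NRA

variable {Sigma : Type} {A : NRA Sigma}

theorem univAccepts_iff_forall_run (w : DataWord Sigma) (c : ℕ × (ℕ → Option ℕ)) :
    UnivAccepts A.Step {c | c.1 ∈ A.F} c w ↔ ∀ u v : DataWord Sigma, w = u ++ v →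
      ∀ c', A.Run c u c' →
        (v = [] → c'.1 ∈ A.F) ∧ ∀ x v', v = x :: v' → ∃ c'', A.Step c' x c'' := by
  induction w generalizing c with
  | nil =>
    constructor
    · rintro h u v huv c' hrun
      obtain ⟨rfl, rfl⟩ := List.append_eq_nil_iff.1 huv.symm
      cases hrun
      exact ⟨fun _ => h, by simp⟩
    · exact fun h => (h [] [] rfl c (.nil c)).1 rfl
  | cons x w ih =>
    constructor
    · rintro ⟨hlive, hsucc⟩ u v huv c' (_ | ⟨hstep, hrun⟩)
      · subst huv
        exact ⟨by simp, by rintro _ _ ⟨⟩; exact hlive⟩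
      · obtain ⟨rfl, rfl⟩ := List.cons.inj huv
        exact (ih _).1 (hsucc _ hstep) _ v rfl c' hrun
    · intro h
      refine ⟨(h [] (x :: w) rfl c (.nil c)).2 x w rfl, fun c' hstep => (ih c').2 ?_⟩
      rintro u v rfl c'' hrun
      exact h (x :: u) v rfl c'' (.cons hstep hrun)

theorem mem_URALang_iff {w : DataWord Sigma} :
    w ∈ A.URALang ↔
      ∀ q ∈ A.I, UnivAccepts A.Step {c | c.1 ∈ A.F} (q, fun _ => none) w := by
  simp only [univAccepts_iff_forall_run]
  rfl

variable (A) (r₀ : ℕ)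

/-- The content of the register `r₀`, read as empty when `r₀` is not a register of `A`: an `NRA`
may update such a register, but cannot test it. -/
def value (f : ℕ → Option ℕ) : Option ℕ :=
  if r₀ ∈ A.R then f r₀ else none

/-- The effect of a transition on `A.value r₀`, provided `r₀` is the only possible register. -/
def action (t : NRATrans Sigma) : RegAction :=
  if r₀ ∈ A.R then
    match t.upd r₀ with
    | .reg _ => .keep
    | .input => .store
    | .clear => .clear
  else .clear

/-- `A` seen as a one-register automaton with register `r₀`. -/
def toEqAutomaton : EqAutomaton Sigma A.Q where
  rules := Set.range fun t : A.Δ =>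
    { src := ⟨t.1.src, (A.wf t t.2).1⟩
      letter := t.1.letter
      test := t.1.gEq.Nonempty
      act := A.action r₀ t
      tgt := ⟨t.1.tgt, (A.wf t t.2).2.1⟩ }
  init := {q | q.1 ∈ A.I}
  final := {q | q.1 ∈ A.F}

variable {A r₀}

theorem value_apply (hR : A.R ⊆ {r₀}) {t : NRATrans Sigma} (ht : t ∈ A.Δ) (f : ℕ → Option ℕ)
    (d : ℕ) : A.value r₀ (t.apply f d) = (A.action r₀ t).run (A.value r₀ f) d := by
  by_cases hr : r₀ ∈ A.R
  · simp only [value, action, NRATrans.apply, hr, if_true]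
    cases hupd : t.upd r₀ with
    | reg r =>
      obtain rfl : r = r₀ := Finset.mem_singleton.1 (hR ((A.wf t ht).2.2.2.2.2 r₀ hr r hupd))
      rfl
    | input => rfl
    | clear => rfl
  · simp [value, action, hr, RegAction.run]

theorem gEq_satisfied_iff (hR : A.R ⊆ {r₀}) {t : NRATrans Sigma} (ht : t ∈ A.Δ)
    {f : ℕ → Option ℕ} {d : ℕ} :
    (∀ r ∈ t.gEq, f r = some d) ↔ (t.gEq.Nonempty → A.value r₀ f = some d) := by
  have hvalue {r : ℕ} (hr : r ∈ t.gEq) : A.value r₀ f = f r := by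
    have hrR := (A.wf t ht).2.2.1 hr
    obtain rfl := Finset.mem_singleton.1 (hR hrR)
    simp [value, hrR]
  exact ⟨fun h ⟨r, hr⟩ => (hvalue hr).trans (h r hr), fun h r hr => hvalue hr ▸ h ⟨r, hr⟩⟩

theorem step_iff (hR : A.R ⊆ {r₀}) (hneq : ∀ t ∈ A.Δ, t.gNeq = ∅) {c c' : ℕ × (ℕ → Option ℕ)}
    {x : Sigma × ℕ} :
    A.Step c x c' ↔ ∃ t ∈ A.Δ, t.src = c.1 ∧ t.letter = x.1 ∧
      (t.gEq.Nonempty → A.value r₀ c.2 = some x.2) ∧ c' = (t.tgt, t.apply c.2 x.2) := by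
  refine exists_congr fun t => and_congr_right fun ht => ?_
  simp [hneq t ht, gEq_satisfied_iff hR ht]

theorem univAccepts_toEqAutomaton_iff (hR : A.R ⊆ {r₀}) (hneq : ∀ t ∈ A.Δ, t.gNeq = ∅)
    (w : DataWord Sigma) (q : A.Q) (f : ℕ → Option ℕ) :
    UnivAccepts A.Step {c | c.1 ∈ A.F} (q, f) w ↔
      UnivAccepts (A.toEqAutomaton r₀).Step {c | c.1 ∈ (A.toEqAutomaton r₀).final}
        (q, A.value r₀ f) w := by
  refine univAccepts_iff_of_bisimulation
    (r := fun c b => c.1 = b.1 ∧ A.value r₀ c.2 = b.2) ?_ ?_ ?_ ⟨rfl, rfl⟩ w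
  · rintro ⟨p, f⟩ ⟨q, v⟩ ⟨(rfl : p = q), (rfl : A.value r₀ f = v)⟩
    rfl
  · rintro ⟨p, f⟩ ⟨q, v⟩ x c' ⟨(rfl : p = q), (rfl : A.value r₀ f = v)⟩ hstep
    obtain ⟨t, ht, hsrc, hletter, htest, rfl⟩ := (step_iff hR hneq).1 hstep
    exact ⟨_, ⟨_, ⟨⟨t, ht⟩, rfl⟩, Subtype.ext hsrc, hletter, htest, rfl⟩, rfl,
      value_apply hR ht f x.2⟩
  · rintro ⟨p, f⟩ ⟨q, v⟩ x b' ⟨(rfl : p = q), (rfl : A.value r₀ f = v)⟩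
      ⟨_, ⟨⟨t, ht⟩, rfl⟩, hsrc, hletter, htest, rfl⟩
    exact ⟨_, (step_iff hR hneq).2 ⟨t, ht, congrArg Subtype.val hsrc, hletter, htest, rfl⟩, rfl,
      value_apply hR ht f x.2⟩

theorem univLang_toEqAutomaton (hR : A.R ⊆ {r₀}) (hneq : ∀ t ∈ A.Δ, t.gNeq = ∅) :
    (A.toEqAutomaton r₀).UnivLang = A.URALang := by
  have hvalue : A.value r₀ (fun _ => none) = none := by simp [value]
  ext w
  rw [mem_URALang_iff]
  constructor
  · intro h q hq
    exact (univAccepts_toEqAutomaton_iff hR hneq w ⟨q, A.I_sub hq⟩ _).2 (h _ ⟨hq, hvalue⟩)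
  · rintro h ⟨q, _⟩ ⟨hq, rfl⟩
    exact hvalue ▸ (univAccepts_toEqAutomaton_iff hR hneq w q _).1 (h q hq)

end NRA

/-- Every URA with at most one register and no disequality guards
can be converted to a deterministic RsA with the same language. -/
theorem ura_eq_one_to_drsa (Sigma : Type) [Fintype Sigma] [Nonempty Sigma]
    (A : NRA Sigma) (hreg : A.R.card ≤ 1) (hneq : ∀ t ∈ A.Δ, t.gNeq = ∅) :
    ∃ D : RsA Sigma, D.Deterministic ∧ RsA.Lang D = NRA.URALang A := by
  obtain ⟨r₀, hR⟩ := Finset.card_le_one_iff_subset_singleton.1 hreg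
  rw [← NRA.univLang_toEqAutomaton hR hneq]
  exact (A.toEqAutomaton r₀).exists_deterministic_rsa
end
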